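/- Let 0 < α < n, 1 < p < n/α, 1/q = 1/p − α/n, and w ∈ A_{p,q}. Suppose ψ₁ and ψ₂ are positive functions on ℝⁿ × (0,∞) for which there is a constant C > 0, independent of a and r, with ∫_r^∞ (w^p(B(a,t))^{1/p} / w^q(B(a,t))^{1/q})·ψ₁(a,t) dt/t ≤ C·ψ₂(a,r) for every (a,r) ∈ ℝⁿ × (0,∞). Then the fractional maximal operator M_α is bounded from M^{p,w^p}_{ψ₁} to M^{q,w^q}_{ψ₂}: there is C' > 0 such that ‖M_α f‖_{M^{q,w^q}_{ψ₂}} ≤ C'·‖f‖_{M^{p,w^p}_{ψ₁}} for every f ∈ M^{p,w^p}_{ψ₁}. -/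

import Mathlib

open MeasureTheory Metric Set
open scoped ENNReal

noncomputable section

/-- The weighted measure of a set: `w(E) = ∫_E w(x) dx`, valued in `ℝ≥0∞`. -/
def wSet {n : ℕ} (w : EuclideanSpace ℝ (Fin n) → ℝ)
    (E : Set (EuclideanSpace ℝ (Fin n))) : ℝ≥0∞ :=
  ∫⁻ x in E, ENNReal.ofReal (w x)

/-- The weighted Lebesgue norm `‖f‖_{L^{p,w}(Ω)} = (∫_Ω |f(x)|^p w(x) dx)^{1/p}`. -/
def wLp {n : ℕ} (p : ℝ) (w f : EuclideanSpace ℝ (Fin n) → ℝ)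
    (Ω : Set (EuclideanSpace ℝ (Fin n))) : ℝ≥0∞ :=
  (∫⁻ x in Ω, ENNReal.ofReal |f x| ^ p * ENNReal.ofReal (w x)) ^ (1 / p)

/-- The weighted Lebesgue norm for an `ℝ≥0∞`-valued function. -/
def wLpE {n : ℕ} (p : ℝ) (w : EuclideanSpace ℝ (Fin n) → ℝ)
    (g : EuclideanSpace ℝ (Fin n) → ℝ≥0∞) (Ω : Set (EuclideanSpace ℝ (Fin n))) : ℝ≥0∞ :=
  (∫⁻ x in Ω, g x ^ p * ENNReal.ofReal (w x)) ^ (1 / p)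

/-- The weak weighted Lebesgue norm `‖f‖_{WL^{p,w}(Ω)} = sup_{γ>0} γ·w({x ∈ Ω : |f(x)| > γ})^{1/p}`. -/
def wWeakLp {n : ℕ} (p : ℝ) (w f : EuclideanSpace ℝ (Fin n) → ℝ)
    (Ω : Set (EuclideanSpace ℝ (Fin n))) : ℝ≥0∞ :=
  ⨆ γ : Set.Ioi (0 : ℝ),
    ENNReal.ofReal γ.1 * (wSet w {x | x ∈ Ω ∧ γ.1 < |f x|}) ^ (1 / p)

/-- The weak weighted Lebesgue norm for an `ℝ≥0∞`-valued function. -/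
def wWeakLpE {n : ℕ} (p : ℝ) (w : EuclideanSpace ℝ (Fin n) → ℝ)
    (g : EuclideanSpace ℝ (Fin n) → ℝ≥0∞) (Ω : Set (EuclideanSpace ℝ (Fin n))) : ℝ≥0∞ :=
  ⨆ γ : Set.Ioi (0 : ℝ),
    ENNReal.ofReal γ.1 * (wSet w {x | x ∈ Ω ∧ ENNReal.ofReal γ.1 < g x}) ^ (1 / p)

/-- `f ∈ L^{p,w}_loc`: `f` is measurable and `‖f‖_{L^{p,w}(B)} < ∞` on every ball. -/
def MemLocWLp {n : ℕ} (p : ℝ) (w f : EuclideanSpace ℝ (Fin n) → ℝ) : Prop :=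
  Measurable f ∧ ∀ (a : EuclideanSpace ℝ (Fin n)) (r : ℝ), 0 < r → wLp p w f (ball a r) < ⊤

/-- A weight: nonnegative, measurable, locally integrable, positive a.e. -/
def IsWeight {n : ℕ} (w : EuclideanSpace ℝ (Fin n) → ℝ) : Prop :=
  Measurable w ∧ (∀ x, 0 ≤ w x) ∧ LocallyIntegrable w volume ∧ ∀ᵐ x ∂volume, 0 < w x

/-- The Muckenhoupt class `A_p` for `1 < p`. -/
def MuckAp {n : ℕ} (p : ℝ) (w : EuclideanSpace ℝ (Fin n) → ℝ) : Prop :=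
  ∃ C : ℝ, 0 < C ∧ ∀ (a : EuclideanSpace ℝ (Fin n)) (r : ℝ), 0 < r →
    ((volume (ball a r))⁻¹ * ∫⁻ x in ball a r, ENNReal.ofReal (w x)) *
      ((volume (ball a r))⁻¹ *
        ∫⁻ x in ball a r, ENNReal.ofReal (w x ^ (-(1 / (p - 1))))) ^ (p - 1) ≤
      ENNReal.ofReal C

/-- The Muckenhoupt class `A_1`. -/
def MuckA1 {n : ℕ} (w : EuclideanSpace ℝ (Fin n) → ℝ) : Prop :=
  ∃ C : ℝ, 0 < C ∧ ∀ (a : EuclideanSpace ℝ (Fin n)) (r : ℝ), 0 < r →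
    ((volume (ball a r))⁻¹ * ∫⁻ x in ball a r, ENNReal.ofReal (w x)) *
      essSup (fun x => ENNReal.ofReal (w x)⁻¹) (volume.restrict (ball a r)) ≤
      ENNReal.ofReal C

/-- The class `A_{p,q}` for `1 < p`, where `p'` is the conjugate exponent of `p`. -/
def MuckApq {n : ℕ} (p q p' : ℝ) (w : EuclideanSpace ℝ (Fin n) → ℝ) : Prop :=
  ∃ C : ℝ, 0 < C ∧ ∀ (a : EuclideanSpace ℝ (Fin n)) (r : ℝ), 0 < r →
    ((volume (ball a r))⁻¹ * ∫⁻ x in ball a r, ENNReal.ofReal (w x ^ q)) ^ (1 / q) *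
      ((volume (ball a r))⁻¹ * ∫⁻ x in ball a r, ENNReal.ofReal (w x ^ (-p'))) ^ (1 / p') ≤
      ENNReal.ofReal C

/-- The class `A_{1,q}`. -/
def MuckA1q {n : ℕ} (q : ℝ) (w : EuclideanSpace ℝ (Fin n) → ℝ) : Prop :=
  ∃ C : ℝ, 0 < C ∧ ∀ (a : EuclideanSpace ℝ (Fin n)) (r : ℝ), 0 < r →
    ((volume (ball a r))⁻¹ * ∫⁻ x in ball a r, ENNReal.ofReal (w x ^ q)) ^ (1 / q) *
      essSup (fun x => ENNReal.ofReal (w x)⁻¹) (volume.restrict (ball a r)) ≤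
      ENNReal.ofReal C

/-- The Hardy–Littlewood maximal operator. -/
def HLMax {n : ℕ} (f : EuclideanSpace ℝ (Fin n) → ℝ)
    (x : EuclideanSpace ℝ (Fin n)) : ℝ≥0∞ :=
  ⨆ r : Set.Ioi (0 : ℝ), (volume (ball x r.1))⁻¹ * ∫⁻ y in ball x r.1, ENNReal.ofReal |f y|

/-- The fractional integral operator `I_α` (applied to `|f|`, valued in `ℝ≥0∞`). -/
def fracIntE {n : ℕ} (α : ℝ) (f : EuclideanSpace ℝ (Fin n) → ℝ)
    (x : EuclideanSpace ℝ (Fin n)) : ℝ≥0∞ :=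
  ∫⁻ y, ENNReal.ofReal |f y| / ENNReal.ofReal (dist x y ^ ((n : ℝ) - α))

/-- The fractional maximal operator `M_α`. -/
def fracMax {n : ℕ} (α : ℝ) (f : EuclideanSpace ℝ (Fin n) → ℝ)
    (x : EuclideanSpace ℝ (Fin n)) : ℝ≥0∞ :=
  ⨆ r : Set.Ioi (0 : ℝ),
    (volume (ball x r.1)) ^ (α / (n : ℝ) - 1) * ∫⁻ y in ball x r.1, ENNReal.ofReal |f y|

/-- The generalized weighted Morrey norm `‖f‖_{M^{p,w}_ψ}`. -/
def morreyNorm {n : ℕ} (p : ℝ) (w : EuclideanSpace ℝ (Fin n) → ℝ)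
    (ψ : EuclideanSpace ℝ (Fin n) → ℝ → ℝ) (f : EuclideanSpace ℝ (Fin n) → ℝ) : ℝ≥0∞ :=
  ⨆ (a : EuclideanSpace ℝ (Fin n)) (r : Set.Ioi (0 : ℝ)),
    (ENNReal.ofReal (ψ a r.1))⁻¹ * wSet w (ball a r.1) ^ (-(1 / p)) * wLp p w f (ball a r.1)

/-- The generalized weighted Morrey norm for an `ℝ≥0∞`-valued function. -/
def morreyNormE {n : ℕ} (p : ℝ) (w : EuclideanSpace ℝ (Fin n) → ℝ)
    (ψ : EuclideanSpace ℝ (Fin n) → ℝ → ℝ) (g : EuclideanSpace ℝ (Fin n) → ℝ≥0∞) : ℝ≥0∞ :=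
  ⨆ (a : EuclideanSpace ℝ (Fin n)) (r : Set.Ioi (0 : ℝ)),
    (ENNReal.ofReal (ψ a r.1))⁻¹ * wSet w (ball a r.1) ^ (-(1 / p)) * wLpE p w g (ball a r.1)

/-- The generalized weighted weak Morrey norm `‖f‖_{WM^{p,w}_ψ}`. -/
def morreyWeakNorm {n : ℕ} (p : ℝ) (w : EuclideanSpace ℝ (Fin n) → ℝ)
    (ψ : EuclideanSpace ℝ (Fin n) → ℝ → ℝ) (f : EuclideanSpace ℝ (Fin n) → ℝ) : ℝ≥0∞ :=
  ⨆ (a : EuclideanSpace ℝ (Fin n)) (r : Set.Ioi (0 : ℝ)),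
    (ENNReal.ofReal (ψ a r.1))⁻¹ * wSet w (ball a r.1) ^ (-(1 / p)) * wWeakLp p w f (ball a r.1)

/-- The generalized weighted weak Morrey norm for an `ℝ≥0∞`-valued function. -/
def morreyWeakNormE {n : ℕ} (p : ℝ) (w : EuclideanSpace ℝ (Fin n) → ℝ)
    (ψ : EuclideanSpace ℝ (Fin n) → ℝ → ℝ) (g : EuclideanSpace ℝ (Fin n) → ℝ≥0∞) : ℝ≥0∞ :=
  ⨆ (a : EuclideanSpace ℝ (Fin n)) (r : Set.Ioi (0 : ℝ)),
    (ENNReal.ofReal (ψ a r.1))⁻¹ * wSet w (ball a r.1) ^ (-(1 / p)) * wWeakLpE p w g (ball a r.1)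

end

/-!
The condition `w ∈ A_{p,q}` makes both measures `σ = w ^ (-p') dx` and `u = w ^ q dx` doubling, so
by Vitali's covering lemma the uncentered maximal functions `M_σ` and `M_u` are bounded on their own
Lebesgue spaces. Hölder's inequality on each ball gives the pointwise bound
`(M_α f) ^ q ≲ ‖f‖ ^ (q - p) * M_u (M_σ (f w ^ p') ^ (p / τ) w ^ (-q)) ^ τ` with `τ = 1 + p' / q`
and `‖f‖ = ‖f‖_{L^{p,w^p}}`, hence the Muckenhoupt–Wheeden inequality `L^{p,w^p} → L^{q,w^q}`.

In the Morrey estimate on `B(a, r)`, balls of radius less than `r` only see the part of `f` in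
`B(a, 2r)`, to which Muckenhoupt–Wheeden applies. On larger balls, Hölder and the `A_{p,q}`
condition bound the averages by `‖f‖_{L^{p,w^p}(B(a,2s))} / w^q(B(a,2s))^{1/q}` with `s ≥ r`. By
doubling, this ratio at radius `t` is at most a constant times its integral over `(t, 2t)` against
the measure `dt/t`, and the integral over `(r, ∞)` is what the hypothesis on `ψ₁`, `ψ₂` controls.
-/

open scoped NNReal

section DoublingMeasure

variable {X : Type*} [PseudoMetricSpace X] [MeasurableSpace X] {μ ν : Measure X} {K : ℝ≥0}

/-- A measure is doubling with constant `K` if every ball of positive radius has positive measure,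
every ball has finite measure, and doubling the radius of a ball multiplies its measure by at most
`K`. -/
structure IsDoublingMeasure (μ : Measure X) (K : ℝ≥0) : Prop where
  ball_ne_zero : ∀ (a : X) (r : ℝ), 0 < r → μ (ball a r) ≠ 0
  ball_ne_top : ∀ (a : X) (r : ℝ), μ (ball a r) ≠ ∞
  ball_two_mul_le : ∀ (a : X) (r : ℝ), μ (ball a (2 * r)) ≤ K * μ (ball a r)

lemma IsDoublingMeasure.ball_four_mul_le (hμ : IsDoublingMeasure μ K) (a : X) (r : ℝ) :
    μ (ball a (4 * r)) ≤ K ^ 2 * μ (ball a r) :=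
  calc μ (ball a (4 * r)) = μ (ball a (2 * (2 * r))) := by ring_nf
    _ ≤ K * μ (ball a (2 * r)) := hμ.ball_two_mul_le a _
    _ ≤ K * (K * μ (ball a r)) := by gcongr; exact hμ.ball_two_mul_le a r
    _ = K ^ 2 * μ (ball a r) := by ring

lemma IsDoublingMeasure.measure_le_of_forall_mem_ball_radius_le [OpensMeasurableSpace X]
    [SecondCountableTopology X] (hμ : IsDoublingMeasure μ K) {E : Set X} {c : ℝ≥0∞} {R : ℝ}
    (hE : ∀ x ∈ E, ∃ a r, r ≤ R ∧ x ∈ ball a r ∧ μ (ball a r) ≤ c * ν (ball a r)) :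
    μ E ≤ K ^ 2 * c * ν univ := by
  let t : Set (X × ℝ) := {i | 0 < i.2 ∧ i.2 ≤ R ∧ μ (ball i.1 i.2) ≤ c * ν (ball i.1 i.2)}
  obtain ⟨u, hut, hdisj, hcover⟩ := Vitali.exists_disjoint_subfamily_covering_enlargement_ball t
    Prod.fst Prod.snd R (fun i hi => hi.2.1) 4 (by norm_num)
  have hcount : u.Countable := hdisj.countable_of_isOpen (fun _ _ => isOpen_ball)
    fun i hi => nonempty_ball.2 (hut hi).1
  have hsub : E ⊆ ⋃ i ∈ u, ball i.1 (4 * i.2) := fun x hx => by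
    obtain ⟨a, r, hrR, hxa, hle⟩ := hE x hx
    obtain ⟨b, hb, hab⟩ := hcover (a, r) ⟨pos_of_mem_ball hxa, hrR, hle⟩
    exact mem_biUnion hb (hab hxa)
  calc μ E ≤ ∑' i : u, μ (ball i.1.1 (4 * i.1.2)) :=
        (measure_mono hsub).trans (measure_biUnion_le _ hcount _)
    _ ≤ ∑' i : u, K ^ 2 * c * ν (ball i.1.1 i.1.2) := by
        refine ENNReal.tsum_le_tsum fun i => (hμ.ball_four_mul_le _ _).trans ?_
        rw [mul_assoc]
        gcongr
        exact (hut i.2).2.2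
    _ = K ^ 2 * c * ν (⋃ i ∈ u, ball i.1 i.2) := by
        rw [ENNReal.tsum_mul_left, measure_biUnion hcount hdisj fun _ _ => measurableSet_ball]
    _ ≤ K ^ 2 * c * ν univ := by gcongr; exact subset_univ _

lemma IsDoublingMeasure.measure_le_of_forall_mem_ball [OpensMeasurableSpace X]
    [SecondCountableTopology X] (hμ : IsDoublingMeasure μ K) {E : Set X} {c : ℝ≥0∞}
    (hE : ∀ x ∈ E, ∃ a r, x ∈ ball a r ∧ μ (ball a r) ≤ c * ν (ball a r)) :
    μ E ≤ K ^ 2 * c * ν univ := by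
  let F : ℕ → Set X := fun R =>
    {x | ∃ (a : X) (r : ℝ), r ≤ R ∧ x ∈ ball a r ∧ μ (ball a r) ≤ c * ν (ball a r)}
  have hF_mono : Monotone F := fun R S hRS x ⟨a, r, hr, hx⟩ =>
    ⟨a, r, hr.trans (Nat.cast_le.2 hRS), hx⟩
  have hE_sub : E ⊆ ⋃ R, F R := fun x hx => by
    obtain ⟨a, r, hx⟩ := hE x hx
    obtain ⟨R, hR⟩ := exists_nat_ge r
    exact mem_iUnion.2 ⟨R, a, r, hR, hx⟩
  calc μ E ≤ ⨆ R, μ (F R) := (measure_mono hE_sub).trans_eq hF_mono.measure_iUnion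
    _ ≤ K ^ 2 * c * ν univ :=
        iSup_le fun _ => hμ.measure_le_of_forall_mem_ball_radius_le fun _ hx => hx

end DoublingMeasure

section UncenteredMaximal

variable {X : Type*} [PseudoMetricSpace X] [MeasurableSpace X] {μ : Measure X} {K : ℝ≥0}
  {g : X → ℝ≥0∞} {x : X}

/-- The uncentered Hardy–Littlewood maximal function of `g` with respect to `μ`: the supremum of
the `μ`-averages of `g` over all balls containing the point. -/
noncomputable def uncenteredMaximal (μ : Measure X) (g : X → ℝ≥0∞) (x : X) : ℝ≥0∞ :=
  ⨆ (a : X) (r : ℝ) (_ : x ∈ ball a r), ⨍⁻ y in ball a r, g y ∂μ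

lemma setLAverage_le_uncenteredMaximal {a : X} {r : ℝ} (hx : x ∈ ball a r) :
    ⨍⁻ y in ball a r, g y ∂μ ≤ uncenteredMaximal μ g x :=
  le_iSup_of_le a (le_iSup_of_le r (le_iSup_of_le hx le_rfl))

lemma lt_uncenteredMaximal_iff {c : ℝ≥0∞} :
    c < uncenteredMaximal μ g x ↔ ∃ a r, x ∈ ball a r ∧ c < ⨍⁻ y in ball a r, g y ∂μ := by
  simp only [uncenteredMaximal, lt_iSup_iff, exists_prop]

lemma lowerSemicontinuous_uncenteredMaximal : LowerSemicontinuous (uncenteredMaximal μ g) := by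
  intro x c hc
  obtain ⟨a, r, hxa, hlt⟩ := lt_uncenteredMaximal_iff.1 hc
  filter_upwards [isOpen_ball.mem_nhds hxa] with y hy
  exact lt_uncenteredMaximal_iff.2 ⟨a, r, hy, hlt⟩

lemma measurable_uncenteredMaximal [OpensMeasurableSpace X] :
    Measurable (uncenteredMaximal μ g) :=
  lowerSemicontinuous_uncenteredMaximal.measurable

lemma half_mul_measure_le_of_le_setLAverage {α : Type*} [MeasurableSpace α] {μ : Measure α}
    {g : α → ℝ≥0∞} {s : Set α} (hs₀ : μ s ≠ 0) (hs : μ s ≠ ∞) {t : ℝ≥0∞}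
    (ht : t ≠ ∞) (h : t ≤ ⨍⁻ y in s, g y ∂μ) :
    t / 2 * μ s ≤ ∫⁻ y in s, {y | t < 2 * g y}.indicator g y ∂μ := by
  have hle : t / 2 * μ s + t / 2 * μ s ≤
      (∫⁻ y in s, {y | t < 2 * g y}.indicator g y ∂μ) + t / 2 * μ s :=
    calc t / 2 * μ s + t / 2 * μ s = t * μ s := by rw [← add_mul, ENNReal.add_halves]
      _ ≤ ∫⁻ y in s, g y ∂μ := by
          rwa [setLAverage_eq, ENNReal.le_div_iff_mul_le (.inl hs₀) (.inl hs)] at h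
      _ ≤ ∫⁻ y in s, ({y | t < 2 * g y}.indicator g y + t / 2) ∂μ := by
          gcongr with y
          by_cases hy : y ∈ {y | t < 2 * g y}
          · rw [indicator_of_mem hy]
            exact le_self_add
          · rw [indicator_of_notMem hy, zero_add, ENNReal.le_div_iff_mul_le (by simp) (by simp),
              mul_comm]
            exact not_lt.1 hy
      _ = _ := by rw [lintegral_add_right _ measurable_const, setLIntegral_const]
  exact (ENNReal.add_le_add_iff_right (by finiteness)).1 hle

lemma IsDoublingMeasure.measure_lt_uncenteredMaximal_le [OpensMeasurableSpace X]
    [SecondCountableTopology X] (hμ : IsDoublingMeasure μ K) (hg : Measurable g) {t : ℝ≥0∞}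
    (ht₀ : t ≠ 0) (ht : t ≠ ∞) :
    μ {x | t < uncenteredMaximal μ g x} ≤
      K ^ 2 * (t / 2)⁻¹ * μ.withDensity g {x | t < 2 * g x} := by
  have hmeas : MeasurableSet {x | t < 2 * g x} := measurableSet_lt (by fun_prop) (by fun_prop)
  rw [← Measure.restrict_apply_univ (μ := μ.withDensity g)]
  refine hμ.measure_le_of_forall_mem_ball fun x hx => ?_
  obtain ⟨a, r, hxa, hlt⟩ := lt_uncenteredMaximal_iff.1 hx
  refine ⟨a, r, hxa, ?_⟩
  have h := half_mul_measure_le_of_le_setLAverage (hμ.ball_ne_zero a r (pos_of_mem_ball hxa))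
    (hμ.ball_ne_top a r) ht hlt.le
  rwa [mul_comm, ← div_eq_mul_inv, restrict_withDensity hmeas, ← withDensity_indicator hmeas,
    withDensity_apply _ measurableSet_ball,
    ENNReal.le_div_iff_mul_le (.inl (by simpa using ht₀)) (.inl (by finiteness)), mul_comm]

end UncenteredMaximal

section LayerCake

lemma lintegral_Ioi_ofReal_rpow (s : ℝ) : ∫⁻ t in Ioi (0 : ℝ), ENNReal.ofReal (t ^ s) = ∞ := by
  by_contra h
  refine not_integrableOn_Ioi_rpow s ((lintegral_ofReal_ne_top_iff_integrable ?_ ?_).1 h)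
  · exact (by fun_prop : Measurable fun t : ℝ => t ^ s).aestronglyMeasurable
  · filter_upwards [ae_restrict_mem measurableSet_Ioi] with t ht
    exact Real.rpow_nonneg (mem_Ioi.1 ht).le s

lemma lintegral_rpow_eq_lintegral_measure_ofReal_lt_mul {α : Type*} [MeasurableSpace α]
    {μ : Measure α} {f : α → ℝ≥0∞} (hf : AEMeasurable f μ) {p : ℝ} (hp : 0 < p) :
    ∫⁻ x, f x ^ p ∂μ = ENNReal.ofReal p *
      ∫⁻ t in Ioi (0 : ℝ), μ {x | ENNReal.ofReal t < f x} * ENNReal.ofReal (t ^ (p - 1)) := by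
  by_cases htop : μ {x | f x = ∞} = 0
  · have hfin : ∀ᵐ x ∂μ, f x ≠ ∞ := by simpa only [ae_iff, not_not] using htop
    calc ∫⁻ x, f x ^ p ∂μ = ∫⁻ x, ENNReal.ofReal ((f x).toReal ^ p) ∂μ := by
          refine lintegral_congr_ae (hfin.mono fun x hx => ?_)
          dsimp only
          rw [← ENNReal.ofReal_rpow_of_nonneg ENNReal.toReal_nonneg hp.le, ENNReal.ofReal_toReal hx]
      _ = _ := lintegral_rpow_eq_lintegral_meas_lt_mul μ
          (ae_of_all _ fun _ => ENNReal.toReal_nonneg) hf.ennreal_toReal hp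
      _ = _ := by
          congr 1
          refine setLIntegral_congr_fun measurableSet_Ioi fun t ht => ?_
          refine congrArg (· * _) (measure_congr (hfin.mono fun x hx => propext ?_))
          exact (ENNReal.ofReal_lt_iff_lt_toReal (mem_Ioi.1 ht).le hx).symm
  · have hleft : ∫⁻ x, f x ^ p ∂μ = ∞ := by
      by_contra h
      refine htop (measure_mono_null (fun x hx => ?_)
        (ae_iff.1 (ae_lt_top' (hf.pow_const p) h)))
      simp [show f x = ∞ from hx, hp]
    have hright : ∫⁻ t in Ioi (0 : ℝ),
        μ {x | ENNReal.ofReal t < f x} * ENNReal.ofReal (t ^ (p - 1)) = ∞ := by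
      rw [eq_top_iff]
      calc ∞ = ∫⁻ t in Ioi (0 : ℝ), μ {x | f x = ∞} * ENNReal.ofReal (t ^ (p - 1)) := by
            rw [lintegral_const_mul _ (by fun_prop), lintegral_Ioi_ofReal_rpow,
              ENNReal.mul_top htop]
        _ ≤ _ := by
            gcongr with t
            exact fun (hx : f _ = ∞) => hx.symm ▸ ENNReal.ofReal_lt_top
    rw [hleft, hright, ENNReal.mul_top (by simpa using hp)]

end LayerCake

section StrongType

variable {X : Type*} [PseudoMetricSpace X] [MeasurableSpace X] [OpensMeasurableSpace X]
  [SecondCountableTopology X] {μ : Measure X} {K : ℝ≥0}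

lemma lintegral_withDensity_two_mul_rpow {α : Type*} [MeasurableSpace α] {μ : Measure α}
    {g : α → ℝ≥0∞} (hg : Measurable g) {p : ℝ} (hp : 1 < p) :
    ∫⁻ x, (2 * g x) ^ (p - 1) ∂μ.withDensity g = 2 ^ (p - 1) * ∫⁻ x, g x ^ p ∂μ := by
  have hp' : 0 < p - 1 := sub_pos.2 hp
  rw [lintegral_withDensity_eq_lintegral_mul _ hg (by fun_prop),
    ← lintegral_const_mul _ (by fun_prop)]
  refine lintegral_congr fun x => ?_
  calc g x * (2 * g x) ^ (p - 1) = 2 ^ (p - 1) * (g x ^ (1 : ℝ) * g x ^ (p - 1)) := by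
        rw [ENNReal.mul_rpow_of_nonneg _ _ hp'.le, ENNReal.rpow_one]; ring
    _ = 2 ^ (p - 1) * g x ^ p := by
        rw [← ENNReal.rpow_add_of_nonneg _ _ zero_le_one hp'.le, add_sub_cancel]

lemma IsDoublingMeasure.measure_lt_uncenteredMaximal_mul_rpow_le (hμ : IsDoublingMeasure μ K)
    {g : X → ℝ≥0∞} (hg : Measurable g) {t : ℝ} (ht : 0 < t) (p : ℝ) :
    μ {x | ENNReal.ofReal t < uncenteredMaximal μ g x} * ENNReal.ofReal (t ^ (p - 1)) ≤
      2 * K ^ 2 * (μ.withDensity g {x | ENNReal.ofReal t < 2 * g x} *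
        ENNReal.ofReal (t ^ (p - 1 - 1))) := by
  have hpow : (ENNReal.ofReal t / 2)⁻¹ * ENNReal.ofReal (t ^ (p - 1)) =
      2 * ENNReal.ofReal (t ^ (p - 1 - 1)) := by
    rw [Real.rpow_sub_one ht.ne' (p - 1), ENNReal.ofReal_div_of_pos ht,
      ENNReal.inv_div (by simp) (by simp), div_eq_mul_inv, div_eq_mul_inv]
    ring
  calc _ ≤ K ^ 2 * (ENNReal.ofReal t / 2)⁻¹ * μ.withDensity g {x | ENNReal.ofReal t < 2 * g x} *
        ENNReal.ofReal (t ^ (p - 1)) := by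
        gcongr
        exact hμ.measure_lt_uncenteredMaximal_le hg (by simpa using ht) ENNReal.ofReal_ne_top
    _ = K ^ 2 * μ.withDensity g {x | ENNReal.ofReal t < 2 * g x} *
        ((ENNReal.ofReal t / 2)⁻¹ * ENNReal.ofReal (t ^ (p - 1))) := by ring
    _ = _ := by rw [hpow]; ring

/-- The constant in the strong type `(p, p)` inequality for the uncentered maximal function with
respect to a measure that is doubling with constant `K`. -/
noncomputable def strongTypeConst (p : ℝ) (K : ℝ≥0) : ℝ≥0 :=
  (p / (p - 1)).toNNReal * 2 ^ p * K ^ 2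

lemma IsDoublingMeasure.lintegral_uncenteredMaximal_rpow_le (hμ : IsDoublingMeasure μ K) {p : ℝ}
    (hp : 1 < p) {g : X → ℝ≥0∞} (hg : Measurable g) :
    ∫⁻ x, uncenteredMaximal μ g x ^ p ∂μ ≤ strongTypeConst p K * ∫⁻ x, g x ^ p ∂μ := by
  have hp₀ : 0 < p := zero_lt_one.trans hp
  have hp' : 0 < p - 1 := sub_pos.2 hp
  let I := ∫⁻ t in Ioi (0 : ℝ), μ.withDensity g {x | ENNReal.ofReal t < 2 * g x} *
    ENNReal.ofReal (t ^ (p - 1 - 1))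
  have hI : ENNReal.ofReal (p - 1) * I = 2 ^ (p - 1) * ∫⁻ x, g x ^ p ∂μ := by
    rw [← lintegral_withDensity_two_mul_rpow hg hp,
      lintegral_rpow_eq_lintegral_measure_ofReal_lt_mul (hg.const_mul 2).aemeasurable hp']
  calc ∫⁻ x, uncenteredMaximal μ g x ^ p ∂μ
      ≤ ENNReal.ofReal p * (2 * K ^ 2 * I) := by
        rw [lintegral_rpow_eq_lintegral_measure_ofReal_lt_mul
          measurable_uncenteredMaximal.aemeasurable hp₀]
        gcongr ENNReal.ofReal p * ?_
        rw [← lintegral_const_mul' _ _ (by finiteness)]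
        exact setLIntegral_mono' measurableSet_Ioi fun t ht =>
          hμ.measure_lt_uncenteredMaximal_mul_rpow_le hg ht p
    _ = ENNReal.ofReal (p / (p - 1)) * (2 * K ^ 2) * (ENNReal.ofReal (p - 1) * I) := by
        rw [← div_mul_cancel₀ p hp'.ne', ENNReal.ofReal_mul (by positivity),
          div_mul_cancel₀ p hp'.ne']
        ring
    _ = ENNReal.ofReal (p / (p - 1)) * (2 ^ (1 : ℝ) * 2 ^ (p - 1)) * K ^ 2 *
        ∫⁻ x, g x ^ p ∂μ := by rw [hI, ENNReal.rpow_one]; ring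
    _ = strongTypeConst p K * ∫⁻ x, g x ^ p ∂μ := by
        rw [← ENNReal.rpow_add_of_nonneg _ _ zero_le_one hp'.le, add_sub_cancel, strongTypeConst]
        push_cast [ENNReal.coe_rpow_of_nonneg _ hp₀.le]
        rfl

end StrongType

section RpowMeasure

variable {X : Type*} [MeasurableSpace X] {μ : Measure X} {ω : X → ℝ≥0∞}

/-- The measure `ω ^ s dμ`. Both measures attached to an `A_{p,q}` weight `w`, namely `w ^ q dx` and
`w ^ (-p') dx`, have this form. -/
noncomputable def rpowMeasure (μ : Measure X) (ω : X → ℝ≥0∞) (s : ℝ) : Measure X :=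
  μ.withDensity fun x => ω x ^ s

/-- A measurable `ℝ≥0∞`-valued weight that is positive and finite almost everywhere. -/
structure IsPosWeight (μ : Measure X) (ω : X → ℝ≥0∞) : Prop where
  measurable : Measurable ω
  ae_ne_zero : ∀ᵐ x ∂μ, ω x ≠ 0
  ae_ne_top : ∀ᵐ x ∂μ, ω x ≠ ∞

lemma rpowMeasure_zero : rpowMeasure μ ω 0 = μ := by
  simp only [rpowMeasure, ENNReal.rpow_zero, ← Pi.one_def, withDensity_one]

lemma rpowMeasure_inv (s : ℝ) : rpowMeasure μ ω⁻¹ s = rpowMeasure μ ω (-s) := by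
  simp only [rpowMeasure, Pi.inv_apply, ENNReal.inv_rpow, ENNReal.rpow_neg]

lemma restrict_rpowMeasure {B : Set X} (hB : MeasurableSet B) (s : ℝ) :
    (rpowMeasure μ ω s).restrict B = rpowMeasure (μ.restrict B) ω s :=
  restrict_withDensity hB _

lemma rpowMeasure_apply {B : Set X} (hB : MeasurableSet B) (s : ℝ) :
    rpowMeasure μ ω s B = ∫⁻ x in B, ω x ^ s ∂μ :=
  withDensity_apply _ hB

namespace IsPosWeight

lemma restrict (hω : IsPosWeight μ ω) (B : Set X) : IsPosWeight (μ.restrict B) ω :=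
  ⟨hω.measurable, ae_restrict_of_ae hω.ae_ne_zero, ae_restrict_of_ae hω.ae_ne_top⟩

lemma inv (hω : IsPosWeight μ ω) : IsPosWeight μ ω⁻¹ :=
  ⟨hω.measurable.inv, hω.ae_ne_top.mono fun _ => ENNReal.inv_ne_zero.2,
    hω.ae_ne_zero.mono fun _ => ENNReal.inv_ne_top.2⟩

lemma ae_rpow_ne_zero (hω : IsPosWeight μ ω) (s : ℝ) : ∀ᵐ x ∂μ, ω x ^ s ≠ 0 := by
  filter_upwards [hω.ae_ne_zero, hω.ae_ne_top] with x h₀ h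
  exact (ENNReal.rpow_pos (pos_iff_ne_zero.2 h₀) h).ne'

lemma ae_rpow_ne_top (hω : IsPosWeight μ ω) (s : ℝ) : ∀ᵐ x ∂μ, ω x ^ s ≠ ∞ := by
  filter_upwards [hω.ae_ne_zero, hω.ae_ne_top] with x h₀ h
  exact ENNReal.rpow_ne_top_of_ne_zero h₀ h

lemma absolutelyContinuous_rpowMeasure (hω : IsPosWeight μ ω) (s : ℝ) :
    μ ≪ rpowMeasure μ ω s :=
  withDensity_absolutelyContinuous' (hω.measurable.pow_const s).aemeasurable (hω.ae_rpow_ne_zero s)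

lemma lintegral_rpowMeasure (hω : IsPosWeight μ ω) (s : ℝ) (f : X → ℝ≥0∞) :
    ∫⁻ x, f x ∂rpowMeasure μ ω s = ∫⁻ x, ω x ^ s * f x ∂μ :=
  lintegral_withDensity_eq_lintegral_mul_non_measurable μ (hω.measurable.pow_const s)
    ((hω.ae_rpow_ne_top s).mono fun _ h => h.lt_top) f

lemma setLIntegral_rpowMeasure (hω : IsPosWeight μ ω) {B : Set X} (hB : MeasurableSet B) (s : ℝ)
    (f : X → ℝ≥0∞) : ∫⁻ x in B, f x ∂rpowMeasure μ ω s = ∫⁻ x in B, ω x ^ s * f x ∂μ := by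
  rw [restrict_rpowMeasure hB, (hω.restrict B).lintegral_rpowMeasure]

lemma lintegral_mul_rpow_rpowMeasure (hω : IsPosWeight μ ω) (f : X → ℝ≥0∞) (s t : ℝ) :
    ∫⁻ x, f x * ω x ^ t ∂rpowMeasure μ ω s = ∫⁻ x, f x ∂rpowMeasure μ ω (s + t) := by
  rw [hω.lintegral_rpowMeasure, hω.lintegral_rpowMeasure]
  refine lintegral_congr_ae ?_
  filter_upwards [hω.ae_ne_zero, hω.ae_ne_top] with x h₀ h
  rw [ENNReal.rpow_add _ _ h₀ h]
  ring

lemma setLIntegral_mul_rpow_rpowMeasure_neg (hω : IsPosWeight μ ω) {B : Set X}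
    (hB : MeasurableSet B) (f : X → ℝ≥0∞) (s : ℝ) :
    ∫⁻ x in B, f x * ω x ^ s ∂rpowMeasure μ ω (-s) = ∫⁻ x in B, f x ∂μ := by
  rw [restrict_rpowMeasure hB, (hω.restrict B).lintegral_mul_rpow_rpowMeasure, neg_add_cancel,
    rpowMeasure_zero]

lemma setLIntegral_le_rpow_mul_rpow (hω : IsPosWeight μ ω) {B : Set X} (hB : MeasurableSet B)
    {p p' : ℝ} (hpp' : p.HolderConjugate p') {f : X → ℝ≥0∞} (hf : Measurable f) :
    ∫⁻ x in B, f x ∂μ ≤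
      (∫⁻ x in B, f x ^ p ∂rpowMeasure μ ω p) ^ p⁻¹ * rpowMeasure μ ω (-p') B ^ p'⁻¹ := by
  have hωm := hω.measurable
  calc ∫⁻ x in B, f x ∂μ = ∫⁻ x in B, (ω x * f x) * (ω x)⁻¹ ∂μ := by
        refine lintegral_congr_ae (ae_restrict_of_ae ?_)
        filter_upwards [hω.ae_ne_zero, hω.ae_ne_top] with x h₀ h
        rw [mul_comm, ← mul_assoc, ENNReal.inv_mul_cancel h₀ h, one_mul]
    _ ≤ (∫⁻ x in B, (ω x * f x) ^ p ∂μ) ^ (1 / p) *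
          (∫⁻ x in B, (ω x)⁻¹ ^ p' ∂μ) ^ (1 / p') :=
        ENNReal.lintegral_mul_le_Lp_mul_Lq _ hpp' (by fun_prop) (by fun_prop)
    _ = _ := by
        simp only [hω.setLIntegral_rpowMeasure hB, rpowMeasure_apply hB, one_div,
          ENNReal.mul_rpow_of_nonneg _ _ hpp'.nonneg, ENNReal.inv_rpow, ENNReal.rpow_neg]

lemma measure_rpow_le_mul (hω : IsPosWeight μ ω) {B : Set X} (hB : MeasurableSet B) {q s : ℝ}
    (hq : 0 < q) (hs : 0 < s) :
    μ B ^ (q⁻¹ + s⁻¹) ≤ rpowMeasure μ ω q B ^ q⁻¹ * rpowMeasure μ ω (-s) B ^ s⁻¹ := by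
  have hωm := hω.measurable
  have hd : 0 < q⁻¹ + s⁻¹ := by positivity
  have hθ : q⁻¹ / (q⁻¹ + s⁻¹) + s⁻¹ / (q⁻¹ + s⁻¹) = 1 := by rw [← add_div, div_self hd.ne']
  have hμ : μ B ≤ rpowMeasure μ ω q B ^ (q⁻¹ / (q⁻¹ + s⁻¹)) *
      rpowMeasure μ ω (-s) B ^ (s⁻¹ / (q⁻¹ + s⁻¹)) := by
    calc μ B = ∫⁻ x in B, (ω x ^ q) ^ (q⁻¹ / (q⁻¹ + s⁻¹)) *
          (ω x ^ (-s)) ^ (s⁻¹ / (q⁻¹ + s⁻¹)) ∂μ := by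
          rw [← setLIntegral_one]
          refine lintegral_congr_ae (ae_restrict_of_ae ?_)
          filter_upwards [hω.ae_ne_zero, hω.ae_ne_top] with x h₀ h
          rw [← ENNReal.rpow_mul, ← ENNReal.rpow_mul, ← ENNReal.rpow_add _ _ h₀ h, mul_div,
            mul_div, neg_mul, mul_inv_cancel₀ hq.ne', mul_inv_cancel₀ hs.ne', neg_div,
            add_neg_cancel, ENNReal.rpow_zero]
      _ ≤ _ := by
          rw [rpowMeasure_apply hB, rpowMeasure_apply hB]
          exact ENNReal.lintegral_mul_norm_pow_le (by fun_prop) (by fun_prop) (by positivity)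
            (by positivity) hθ
  calc μ B ^ (q⁻¹ + s⁻¹) ≤ (rpowMeasure μ ω q B ^ (q⁻¹ / (q⁻¹ + s⁻¹)) *
        rpowMeasure μ ω (-s) B ^ (s⁻¹ / (q⁻¹ + s⁻¹))) ^ (q⁻¹ + s⁻¹) := by gcongr
    _ = _ := by
        rw [ENNReal.mul_rpow_of_nonneg _ _ hd.le, ← ENNReal.rpow_mul, ← ENNReal.rpow_mul,
          div_mul_cancel₀ _ hd.ne', div_mul_cancel₀ _ hd.ne']

end IsPosWeight

end RpowMeasure

section ApqWeight

variable {X : Type*} [PseudoMetricSpace X] [MeasurableSpace X] {μ : Measure X} {ω : X → ℝ≥0∞}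
  {q s : ℝ} {C K : ℝ≥0}

/-- The `A_{p,q}` condition with constant `C`, written with `s = p'` and without averages, so that
it is symmetric under `(ω, q, s) ↦ (ω⁻¹, s, q)`. -/
structure IsApqWeight (μ : Measure X) (q s : ℝ) (C : ℝ≥0) (ω : X → ℝ≥0∞) : Prop
    extends IsPosWeight μ ω where
  ball_mul_le : ∀ (a : X) (r : ℝ), 0 < r →
    rpowMeasure μ ω q (ball a r) ^ q⁻¹ * rpowMeasure μ ω (-s) (ball a r) ^ s⁻¹ ≤
      C * μ (ball a r) ^ (q⁻¹ + s⁻¹)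

namespace IsApqWeight

lemma inv (hω : IsApqWeight μ q s C ω) : IsApqWeight μ s q C ω⁻¹ where
  toIsPosWeight := hω.toIsPosWeight.inv
  ball_mul_le a r hr := by
    rw [rpowMeasure_inv, rpowMeasure_inv, neg_neg, mul_comm, add_comm]
    exact hω.ball_mul_le a r hr

lemma rpowMeasure_ball_ne_zero (hω : IsApqWeight μ q s C ω) (hμ : IsDoublingMeasure μ K) (t : ℝ)
    (a : X) {r : ℝ} (hr : 0 < r) : rpowMeasure μ ω t (ball a r) ≠ 0 :=
  fun h => hμ.ball_ne_zero a r hr (hω.absolutelyContinuous_rpowMeasure t h)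

lemma rpowMeasure_ball_ne_top (hω : IsApqWeight μ q s C ω) (hμ : IsDoublingMeasure μ K)
    (hq : 0 < q) (hs : 0 < s) (a : X) (r : ℝ) : rpowMeasure μ ω q (ball a r) ≠ ∞ := by
  rcases le_or_gt r 0 with hr | hr
  · simp [ball_eq_empty.2 hr]
  intro htop
  have hS : rpowMeasure μ ω (-s) (ball a r) ^ s⁻¹ ≠ 0 := by
    simpa [ENNReal.rpow_eq_zero_iff_of_pos (inv_pos.2 hs)] using
      hω.rpowMeasure_ball_ne_zero hμ (-s) a hr
  have h := hω.ball_mul_le a r hr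
  rw [htop, ENNReal.top_rpow_of_pos (by positivity), ENNReal.top_mul hS, top_le_iff] at h
  exact ENNReal.mul_ne_top ENNReal.coe_ne_top
    (ENNReal.rpow_ne_top_of_nonneg (by positivity) (hμ.ball_ne_top a r)) h

variable [OpensMeasurableSpace X]

lemma rpowMeasure_ball_ne_top_of_le (hω : IsApqWeight μ q s C ω) (hμ : IsDoublingMeasure μ K)
    {p : ℝ} (hp : 0 ≤ p) (hpq : p ≤ q) (hq : 0 < q) (hs : 0 < s) (a : X) (r : ℝ) :
    rpowMeasure μ ω p (ball a r) ≠ ∞ := by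
  have hle : rpowMeasure μ ω p (ball a r) ≤ μ (ball a r) + rpowMeasure μ ω q (ball a r) := by
    rw [rpowMeasure_apply measurableSet_ball, rpowMeasure_apply measurableSet_ball,
      ← setLIntegral_one, ← lintegral_add_left measurable_const]
    refine lintegral_mono fun x => ?_
    rcases le_total (ω x) 1 with hx | hx
    · exact le_add_right (ENNReal.rpow_le_one hx hp)
    · exact le_add_left (ENNReal.rpow_le_rpow_of_exponent_le hx hpq)
  exact ne_top_of_le_ne_top
    (ENNReal.add_ne_top.2 ⟨hμ.ball_ne_top a r, hω.rpowMeasure_ball_ne_top hμ hq hs a r⟩) hle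

lemma rpowMeasure_ball_two_mul_rpow_inv_le (hω : IsApqWeight μ q s C ω)
    (hμ : IsDoublingMeasure μ K) (hq : 0 < q) (hs : 0 < s) (a : X) {r : ℝ} (hr : 0 < r) :
    rpowMeasure μ ω q (ball a (2 * r)) ^ q⁻¹ ≤
      C * K ^ (q⁻¹ + s⁻¹) * rpowMeasure μ ω q (ball a r) ^ q⁻¹ := by
  have hd : 0 ≤ q⁻¹ + s⁻¹ := by positivity
  have hr₂ : 0 < 2 * r := by positivity
  have hS₀ : rpowMeasure μ ω (-s) (ball a (2 * r)) ^ s⁻¹ ≠ 0 := by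
    simpa [ENNReal.rpow_eq_zero_iff_of_pos (inv_pos.2 hs)] using
      hω.rpowMeasure_ball_ne_zero hμ (-s) a hr₂
  have hS : rpowMeasure μ ω (-s) (ball a (2 * r)) ^ s⁻¹ ≠ ∞ := by
    rw [← rpowMeasure_inv]
    exact ENNReal.rpow_ne_top_of_nonneg (by positivity)
      (hω.inv.rpowMeasure_ball_ne_top hμ hs hq a _)
  refine (ENNReal.mul_le_mul_iff_left hS₀ hS).1 ?_
  calc _ ≤ C * μ (ball a (2 * r)) ^ (q⁻¹ + s⁻¹) := hω.ball_mul_le a _ hr₂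
    _ ≤ C * (K * μ (ball a r)) ^ (q⁻¹ + s⁻¹) := by gcongr; exact hμ.ball_two_mul_le a r
    _ = C * K ^ (q⁻¹ + s⁻¹) * μ (ball a r) ^ (q⁻¹ + s⁻¹) := by
        rw [ENNReal.mul_rpow_of_nonneg _ _ hd, mul_assoc]
    _ ≤ C * K ^ (q⁻¹ + s⁻¹) * (rpowMeasure μ ω q (ball a r) ^ q⁻¹ *
          rpowMeasure μ ω (-s) (ball a r) ^ s⁻¹) := by
        gcongr; exact hω.measure_rpow_le_mul measurableSet_ball hq hs
    _ ≤ C * K ^ (q⁻¹ + s⁻¹) * (rpowMeasure μ ω q (ball a r) ^ q⁻¹ *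
          rpowMeasure μ ω (-s) (ball a (2 * r)) ^ s⁻¹) := by gcongr; linarith
    _ = _ := by ring

lemma isDoublingMeasure (hω : IsApqWeight μ q s C ω) (hμ : IsDoublingMeasure μ K) (hq : 0 < q)
    (hs : 0 < s) : IsDoublingMeasure (rpowMeasure μ ω q) ((C * K ^ (q⁻¹ + s⁻¹)) ^ q) where
  ball_ne_zero a _ := hω.rpowMeasure_ball_ne_zero hμ q a
  ball_ne_top := hω.rpowMeasure_ball_ne_top hμ hq hs
  ball_two_mul_le a r := by
    rcases le_or_gt r 0 with hr | hr
    · simp [ball_eq_empty.2 (show 2 * r ≤ 0 by linarith)]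
    have h := ENNReal.rpow_le_rpow (hω.rpowMeasure_ball_two_mul_rpow_inv_le hμ hq hs a hr) hq.le
    rwa [ENNReal.rpow_inv_rpow hq.ne', ENNReal.mul_rpow_of_nonneg _ _ hq.le,
      ENNReal.rpow_inv_rpow hq.ne', ← ENNReal.coe_rpow_of_nonneg _ (by positivity),
      ← ENNReal.coe_mul, ← ENNReal.coe_rpow_of_nonneg _ hq.le] at h

lemma isDoublingMeasure_neg (hω : IsApqWeight μ q s C ω) (hμ : IsDoublingMeasure μ K) (hq : 0 < q)
    (hs : 0 < s) : IsDoublingMeasure (rpowMeasure μ ω (-s)) ((C * K ^ (s⁻¹ + q⁻¹)) ^ s) :=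
  rpowMeasure_inv (μ := μ) (ω := ω) s ▸ hω.inv.isDoublingMeasure hμ hs hq

end IsApqWeight

end ApqWeight

section FractionalMaximal

variable {X : Type*} [PseudoMetricSpace X] [MeasurableSpace X] {μ : Measure X}

/-- The centered fractional maximal function of `f`, normalised by `μ (ball x r) ^ (-d)`. On `ℝⁿ`
with Lebesgue measure, `M_α` is the case `d = 1 - α / n`, which for an `A_{p,q}` weight with
`1/q = 1/p - α/n` is `d = 1/q + 1/p'`. -/
noncomputable def fractionalMaximal (μ : Measure X) (d : ℝ) (f : X → ℝ≥0∞) (x : X) : ℝ≥0∞ :=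
  ⨆ r : Ioi (0 : ℝ), μ (ball x r) ^ (-d) * ∫⁻ y in ball x r, f y ∂μ

lemma fractionalMaximal_le_iff {d : ℝ} {f : X → ℝ≥0∞} {x : X} {c : ℝ≥0∞} :
    fractionalMaximal μ d f x ≤ c ↔
      ∀ r, 0 < r → μ (ball x r) ^ (-d) * ∫⁻ y in ball x r, f y ∂μ ≤ c := by
  simp only [fractionalMaximal, iSup_le_iff, Subtype.forall, mem_Ioi]

end FractionalMaximal

namespace IsApqWeight

variable {X : Type*} [PseudoMetricSpace X] [MeasurableSpace X] {μ : Measure X} {ω : X → ℝ≥0∞}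
  {p q p' s : ℝ} {C K : ℝ≥0} {f : X → ℝ≥0∞}

/-- This is the `(q + s)`-th power of the `A_{p,q}` condition. -/
lemma measure_ball_rpow_neg_mul_le (hω : IsApqWeight μ q s C ω) (hμ : IsDoublingMeasure μ K)
    (hq : 0 < q) (hs : 0 < s) (a : X) {r : ℝ} (hr : 0 < r) :
    (μ (ball a r) ^ (-(q⁻¹ + s⁻¹))) ^ q * rpowMeasure μ ω (-s) (ball a r) ^ ((q + s) / s) ≤
      C ^ (q + s) * (μ (ball a r) / rpowMeasure μ ω q (ball a r)) ^ (1 + s / q) := by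
  have hB₀ := hμ.ball_ne_zero a r hr
  have hB := hμ.ball_ne_top a r
  have hU₀ := hω.rpowMeasure_ball_ne_zero hμ q a hr
  have hU := hω.rpowMeasure_ball_ne_top hμ hq hs a r
  have hτ : 0 < 1 + s / q := by positivity
  set u := rpowMeasure μ ω q (ball a r)
  set v := μ (ball a r)
  have hqs : u ^ (1 + s / q) * rpowMeasure μ ω (-s) (ball a r) ^ ((q + s) / s) ≤
      C ^ (q + s) * v ^ ((q⁻¹ + s⁻¹) * q + (1 + s / q)) := by
    have h := ENNReal.rpow_le_rpow (hω.ball_mul_le a r hr) (by positivity : 0 ≤ q + s)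
    simp only [ENNReal.mul_rpow_of_nonneg _ _ (by positivity : 0 ≤ q + s), ← ENNReal.rpow_mul] at h
    convert h using 3 <;> field_simp
    ring
  rw [ENNReal.div_rpow_of_nonneg _ _ hτ.le, ← mul_div_assoc, ENNReal.le_div_iff_mul_le
    (.inl (ENNReal.rpow_pos (pos_iff_ne_zero.2 hU₀) hU).ne')
    (.inl (ENNReal.rpow_ne_top_of_nonneg hτ.le hU)), ← ENNReal.rpow_mul]
  calc _ = v ^ (-(q⁻¹ + s⁻¹) * q) *
        (u ^ (1 + s / q) * rpowMeasure μ ω (-s) (ball a r) ^ ((q + s) / s)) := by ring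
    _ ≤ v ^ (-(q⁻¹ + s⁻¹) * q) * (C ^ (q + s) * v ^ ((q⁻¹ + s⁻¹) * q + (1 + s / q))) := by gcongr
    _ = C ^ (q + s) * (v ^ (-(q⁻¹ + s⁻¹) * q) * v ^ ((q⁻¹ + s⁻¹) * q + (1 + s / q))) := by ring
    _ = _ := by rw [← ENNReal.rpow_add _ _ hB₀ hB]; congr 2; ring

variable [OpensMeasurableSpace X]

lemma rpow_lintegral_ball_le (hω : IsApqWeight μ q p' C ω) (hμ : IsDoublingMeasure μ K)
    (hpp' : p.HolderConjugate p') (hpq : p ≤ q) (hf : Measurable f) (a : X) {r : ℝ} (hr : 0 < r) :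
    (μ (ball a r) ^ (-(q⁻¹ + p'⁻¹)) * ∫⁻ y in ball a r, f y ∂μ) ^ q ≤
      C ^ (q + p') * ((∫⁻ x, f x ^ p ∂rpowMeasure μ ω p) ^ p⁻¹) ^ (q - p) *
        ((μ (ball a r) / rpowMeasure μ ω q (ball a r)) ^ (1 + p' / q) *
          (⨍⁻ y in ball a r, f y * ω y ^ p' ∂rpowMeasure μ ω (-p')) ^ p) := by
  have hp := hpp'.pos
  have hp' := hpp'.symm.pos
  have hq : 0 < q := hp.trans_le hpq
  have hqp : 0 ≤ q - p := sub_nonneg.2 hpq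
  have hS₀ := hω.rpowMeasure_ball_ne_zero hμ (-p') a hr
  have hS := (hω.isDoublingMeasure_neg hμ hq hp').ball_ne_top a r
  have hA : ∫⁻ y in ball a r, f y ∂μ ≤ (∫⁻ x, f x ^ p ∂rpowMeasure μ ω p) ^ p⁻¹ *
      rpowMeasure μ ω (-p') (ball a r) ^ p'⁻¹ :=
    (hω.setLIntegral_le_rpow_mul_rpow measurableSet_ball hpp' hf).trans (by
      gcongr; exact Measure.restrict_le_self)
  rw [setLAverage_eq, hω.setLIntegral_mul_rpow_rpowMeasure_neg measurableSet_ball,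
    ENNReal.div_rpow_of_nonneg _ _ hp.le]
  set A := ∫⁻ y in ball a r, f y ∂μ
  set N := (∫⁻ x, f x ^ p ∂rpowMeasure μ ω p) ^ p⁻¹
  set σ := rpowMeasure μ ω (-p') (ball a r)
  set V := (μ (ball a r) ^ (-(q⁻¹ + p'⁻¹))) ^ q
  have hσ : (σ ^ p'⁻¹) ^ (q - p) = σ ^ ((q + p') / p') * (σ ^ p)⁻¹ := by
    rw [← ENNReal.rpow_neg, ← ENNReal.rpow_add _ _ hS₀ hS, ← ENNReal.rpow_mul]
    congr 1
    have := hpp'.mul_eq_add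
    field_simp
    linarith
  calc (μ (ball a r) ^ (-(q⁻¹ + p'⁻¹)) * A) ^ q = V * (A ^ (q - p) * A ^ p) := by
        rw [ENNReal.mul_rpow_of_nonneg _ _ hq.le, ← ENNReal.rpow_add_of_nonneg _ _ hqp hp.le,
          sub_add_cancel]
    _ ≤ V * ((N * σ ^ p'⁻¹) ^ (q - p) * A ^ p) := by gcongr
    _ = V * σ ^ ((q + p') / p') * (N ^ (q - p) * (A ^ p / σ ^ p)) := by
        rw [ENNReal.mul_rpow_of_nonneg _ _ hqp, hσ, div_eq_mul_inv (A ^ p)]; ring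
    _ ≤ C ^ (q + p') * (μ (ball a r) / rpowMeasure μ ω q (ball a r)) ^ (1 + p' / q) *
          (N ^ (q - p) * (A ^ p / σ ^ p)) := by
        gcongr ?_ * _
        exact hω.measure_ball_rpow_neg_mul_le hμ hq hp' a hr
    _ = _ := by ring

/-- The maximal functions with respect to `ω ^ q dμ` and `ω ^ (-p') dμ` enter because both measures
are doubling, so that each maximal function is bounded on its own Lebesgue spaces. -/
lemma fractionalMaximal_rpow_le (hω : IsApqWeight μ q p' C ω) (hμ : IsDoublingMeasure μ K)
    (hpp' : p.HolderConjugate p') (hpq : p ≤ q) (hf : Measurable f) (x : X) :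
    fractionalMaximal μ (q⁻¹ + p'⁻¹) f x ^ q ≤
      C ^ (q + p') * ((∫⁻ x, f x ^ p ∂rpowMeasure μ ω p) ^ p⁻¹) ^ (q - p) *
        uncenteredMaximal (rpowMeasure μ ω q) (fun y =>
          uncenteredMaximal (rpowMeasure μ ω (-p')) (fun z => f z * ω z ^ p') y ^
            (p / (1 + p' / q)) * ω y ^ (-q)) x ^ (1 + p' / q) := by
  have hp := hpp'.pos
  have hp' := hpp'.symm.pos
  have hq : 0 < q := hp.trans_le hpq
  have hτ : 0 < 1 + p' / q := by positivity
  rw [← ENNReal.le_rpow_inv_iff hq, fractionalMaximal_le_iff]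
  intro r hr
  rw [ENNReal.le_rpow_inv_iff hq]
  refine (hω.rpow_lintegral_ball_le hμ hpp' hpq hf x hr).trans ?_
  refine mul_le_mul_right ?_ _
  set σ := rpowMeasure μ ω (-p')
  set U := rpowMeasure μ ω q
  set G := uncenteredMaximal σ fun z => f z * ω z ^ p'
  set X₀ := ⨍⁻ y in ball x r, f y * ω y ^ p' ∂σ
  calc (μ (ball x r) / U (ball x r)) ^ (1 + p' / q) * X₀ ^ p
      = (μ (ball x r) / U (ball x r) * X₀ ^ (p / (1 + p' / q))) ^ (1 + p' / q) := by
        rw [ENNReal.mul_rpow_of_nonneg _ _ hτ.le, ← ENNReal.rpow_mul, div_mul_cancel₀ _ hτ.ne']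
    _ = ((∫⁻ _ in ball x r, X₀ ^ (p / (1 + p' / q)) ∂μ) / U (ball x r)) ^ (1 + p' / q) := by
        rw [setLIntegral_const, mul_comm, mul_div_assoc]
    _ ≤ ((∫⁻ y in ball x r, G y ^ (p / (1 + p' / q)) ∂μ) / U (ball x r)) ^ (1 + p' / q) := by
        gcongr ?_ ^ _
        gcongr ?_ / _
        refine setLIntegral_mono' measurableSet_ball fun y hy => ?_
        gcongr
        exact setLAverage_le_uncenteredMaximal hy
    _ = (⨍⁻ y in ball x r, G y ^ (p / (1 + p' / q)) * ω y ^ (-q) ∂U) ^ (1 + p' / q) := by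
        have h := hω.setLIntegral_mul_rpow_rpowMeasure_neg measurableSet_ball (B := ball x r)
          (fun y => G y ^ (p / (1 + p' / q))) (-q)
        rw [neg_neg] at h
        rw [setLAverage_eq, h]
    _ ≤ _ := by
        gcongr
        exact setLAverage_le_uncenteredMaximal (mem_ball_self hr)

lemma lintegral_iterated_uncenteredMaximal_rpow_le [SecondCountableTopology X]
    (hω : IsApqWeight μ q p' C ω) (hμ : IsDoublingMeasure μ K)
    (hpp' : p.HolderConjugate p') (hq : 0 < q) (hf : Measurable f) :
    ∫⁻ x, uncenteredMaximal (rpowMeasure μ ω q) (fun y =>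
        uncenteredMaximal (rpowMeasure μ ω (-p')) (fun z => f z * ω z ^ p') y ^
          (p / (1 + p' / q)) * ω y ^ (-q)) x ^ (1 + p' / q) ∂rpowMeasure μ ω q ≤
      strongTypeConst (1 + p' / q) ((C * K ^ (q⁻¹ + p'⁻¹)) ^ q) *
        (strongTypeConst p ((C * K ^ (p'⁻¹ + q⁻¹)) ^ p') *
          ∫⁻ x, f x ^ p ∂rpowMeasure μ ω p) := by
  have hp := hpp'.pos
  have hp' := hpp'.symm.pos
  have hωm := hω.measurable
  set τ := 1 + p' / q with hτ_def
  have hτ : 1 < τ := lt_add_of_pos_right _ (by positivity)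
  let g : X → ℝ≥0∞ := fun y => f y * ω y ^ p'
  let G := uncenteredMaximal (rpowMeasure μ ω (-p')) g
  let h : X → ℝ≥0∞ := fun y => G y ^ (p / τ) * ω y ^ (-q)
  have hg : Measurable g := by fun_prop
  have hh : Measurable h := (measurable_uncenteredMaximal.pow_const _).mul (hωm.pow_const _)
  have h_int : ∫⁻ x, h x ^ τ ∂rpowMeasure μ ω q = ∫⁻ x, G x ^ p ∂rpowMeasure μ ω (-p') := by
    have hexp : -p' = q + -q * τ := by rw [hτ_def]; field_simp; ring
    rw [hexp, ← hω.lintegral_mul_rpow_rpowMeasure]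
    simp only [h, ENNReal.mul_rpow_of_nonneg _ _ (zero_le_one.trans hτ.le), ← ENNReal.rpow_mul,
      div_mul_cancel₀ _ (zero_lt_one.trans hτ).ne']
  have g_int : ∫⁻ x, g x ^ p ∂rpowMeasure μ ω (-p') = ∫⁻ x, f x ^ p ∂rpowMeasure μ ω p := by
    have hexp : p = -p' + p' * p := by linarith [hpp'.mul_eq_add]
    simp only [g, ENNReal.mul_rpow_of_nonneg _ _ hp.le, ← ENNReal.rpow_mul,
      hω.lintegral_mul_rpow_rpowMeasure]
    rw [← hexp]
  refine ((hω.isDoublingMeasure hμ hq hp').lintegral_uncenteredMaximal_rpow_le hτ hh).trans ?_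
  rw [h_int, ← g_int]
  gcongr
  exact (hω.isDoublingMeasure_neg hμ hq hp').lintegral_uncenteredMaximal_rpow_le hpp'.lt hg

lemma exists_lintegral_fractionalMaximal_rpow_le [SecondCountableTopology X]
    (hω : IsApqWeight μ q p' C ω) (hμ : IsDoublingMeasure μ K)
    (hpp' : p.HolderConjugate p') (hpq : p ≤ q) :
    ∃ D : ℝ≥0, ∀ f : X → ℝ≥0∞, Measurable f →
      ∫⁻ x, fractionalMaximal μ (q⁻¹ + p'⁻¹) f x ^ q ∂rpowMeasure μ ω q ≤
        D * (∫⁻ x, f x ^ p ∂rpowMeasure μ ω p) ^ (q / p) := by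
  have hp := hpp'.pos
  have hp' := hpp'.symm.pos
  have hq : 0 < q := hp.trans_le hpq
  refine ⟨C ^ (q + p') * (strongTypeConst (1 + p' / q) ((C * K ^ (q⁻¹ + p'⁻¹)) ^ q) *
    strongTypeConst p ((C * K ^ (p'⁻¹ + q⁻¹)) ^ p')), fun f hf => ?_⟩
  let I := ∫⁻ x, f x ^ p ∂rpowMeasure μ ω p
  have hI : (I ^ p⁻¹) ^ (q - p) * I = I ^ (q / p) := by
    nth_rewrite 2 [← ENNReal.rpow_one I]
    rw [← ENNReal.rpow_mul, ← ENNReal.rpow_add_of_nonneg _ _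
      (mul_nonneg (inv_nonneg.2 hp.le) (sub_nonneg.2 hpq)) zero_le_one]
    congr 1
    field_simp
    ring
  refine (lintegral_mono fun x => hω.fractionalMaximal_rpow_le hμ hpp' hpq hf x).trans ?_
  rw [lintegral_const_mul _ (measurable_uncenteredMaximal.pow_const _)]
  refine (mul_le_mul_right
    (hω.lintegral_iterated_uncenteredMaximal_rpow_le hμ hpp' hq hf) _).trans_eq ?_
  rw [← hI, ENNReal.coe_mul, ENNReal.coe_mul,
    ENNReal.coe_rpow_of_nonneg _ (by positivity : 0 ≤ q + p')]
  ring

end IsApqWeight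

section ENNRealAndTail

lemma inv_le_mul_inv_of_le_mul {a b k : ℝ≥0∞} (hk : k ≠ ∞) (ha : a ≠ 0) (h : a ≤ k * b) :
    b⁻¹ ≤ k * a⁻¹ :=
  (ENNReal.inv_le_inv.2 (ENNReal.div_le_of_le_mul' h)).trans_eq
    (ENNReal.inv_div (.inl hk) (.inr ha))

lemma le_two_mul_setLIntegral_Ioi_mul_inv {G : ℝ → ℝ≥0∞} {c : ℝ≥0∞} {s : ℝ} (hs : 0 < s)
    (h : ∀ t ∈ Ioc s (2 * s), c ≤ G t) :
    c ≤ 2 * ∫⁻ t in Ioi s, G t * ENNReal.ofReal t⁻¹ := by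
  have hvol : ENNReal.ofReal (2 * s)⁻¹ * volume (Ioc s (2 * s)) = 2⁻¹ := by
    rw [Real.volume_Ioc, ← ENNReal.ofReal_mul (by positivity),
      show (2 * s)⁻¹ * (2 * s - s) = 2⁻¹ by field_simp; ring,
      ENNReal.ofReal_inv_of_pos two_pos, ENNReal.ofReal_ofNat]
  calc c = 2 * (c * ENNReal.ofReal (2 * s)⁻¹ * volume (Ioc s (2 * s))) := by
        rw [mul_assoc, hvol, mul_left_comm, ENNReal.mul_inv_cancel two_ne_zero ENNReal.ofNat_ne_top,
          mul_one]
    _ = 2 * ∫⁻ _ in Ioc s (2 * s), c * ENNReal.ofReal (2 * s)⁻¹ := by rw [setLIntegral_const]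
    _ ≤ 2 * ∫⁻ t in Ioc s (2 * s), G t * ENNReal.ofReal t⁻¹ := by
        refine mul_le_mul_right (setLIntegral_mono' measurableSet_Ioc fun t ht => ?_) _
        have ht₀ : 0 < t := hs.trans ht.1
        gcongr
        exacts [h t ht, ht.2]
    _ ≤ _ := by gcongr; exact Ioc_subset_Ioi_self

lemma rpow_inv_lintegral_max_const_rpow_le {α : Type*} [MeasurableSpace α] {ν : Measure α}
    {g : α → ℝ≥0∞} {T : ℝ≥0∞} {q : ℝ} (hq : 1 ≤ q) :
    (∫⁻ x, max (g x) T ^ q ∂ν) ^ q⁻¹ ≤ (∫⁻ x, g x ^ q ∂ν) ^ q⁻¹ + T * ν univ ^ q⁻¹ := by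
  have hq₀ : 0 < q := zero_lt_one.trans_le hq
  calc (∫⁻ x, max (g x) T ^ q ∂ν) ^ q⁻¹ ≤ (∫⁻ x, (g x ^ q + T ^ q) ∂ν) ^ q⁻¹ := by
        gcongr with x
        rw [ENNReal.max_rpow hq₀.le]
        exact max_le le_self_add le_add_self
    _ = (∫⁻ x, g x ^ q ∂ν + T ^ q * ν univ) ^ q⁻¹ := by
        rw [lintegral_add_right _ measurable_const, lintegral_const]
    _ ≤ (∫⁻ x, g x ^ q ∂ν) ^ q⁻¹ + (T ^ q * ν univ) ^ q⁻¹ :=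
        ENNReal.rpow_add_le_add_rpow _ _ (by positivity) (inv_le_one_of_one_le₀ hq)
    _ = _ := by
        rw [ENNReal.mul_rpow_of_nonneg _ _ (by positivity), ENNReal.rpow_rpow_inv hq₀.ne']

end ENNRealAndTail

section Localization

variable {X : Type*} [PseudoMetricSpace X] [MeasurableSpace X] [OpensMeasurableSpace X]
  {μ : Measure X}

lemma fractionalMaximal_le_max_of_mem_ball {d : ℝ} {f : X → ℝ≥0∞} {a x : X} {r : ℝ} {T : ℝ≥0∞}
    (hx : x ∈ ball a r)
    (hT : ∀ s, r ≤ s → μ (ball x s) ^ (-d) * ∫⁻ y in ball x s, f y ∂μ ≤ T) :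
    fractionalMaximal μ d f x ≤ max (fractionalMaximal μ d ((ball a (2 * r)).indicator f) x) T := by
  refine fractionalMaximal_le_iff.2 fun s hs => ?_
  rcases lt_or_ge s r with hsr | hrs
  · refine le_max_of_le_left ?_
    have hsub : ball x s ⊆ ball a (2 * r) :=
      ball_subset_ball' (by linarith [mem_ball.1 hx])
    have hf : ∫⁻ y in ball x s, f y ∂μ = ∫⁻ y in ball x s, (ball a (2 * r)).indicator f y ∂μ :=
      setLIntegral_congr_fun measurableSet_ball fun y hy => (indicator_of_mem (hsub hy) f).symm
    rw [hf]
    exact fractionalMaximal_le_iff.1 le_rfl s hs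
  · exact le_max_of_le_right (hT s hrs)

end Localization

section LocalNormTail

variable {X : Type*} [PseudoMetricSpace X] [MeasurableSpace X]

/-- The quantity `‖f‖_{L^{p,w^p}(B(a,t))} / w^q(B(a,t))^{1/q}` of a weight `w` given as an
`ℝ≥0∞`-valued function `ω`. -/
noncomputable def normalizedLocalNorm (μ : Measure X) (ω : X → ℝ≥0∞) (p q : ℝ) (f : X → ℝ≥0∞)
    (a : X) (t : ℝ) : ℝ≥0∞ :=
  (∫⁻ x in ball a t, f x ^ p ∂rpowMeasure μ ω p) ^ p⁻¹ * rpowMeasure μ ω q (ball a t) ^ (-q⁻¹)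

/-- The integral of `normalizedLocalNorm` against `dt/t` over `(r, ∞)`, which controls the size of
the fractional maximal function of `f` on `B(a,r)`. -/
noncomputable def localNormTail (μ : Measure X) (ω : X → ℝ≥0∞) (p q : ℝ) (f : X → ℝ≥0∞)
    (a : X) (r : ℝ) : ℝ≥0∞ :=
  ∫⁻ t in Ioi r, normalizedLocalNorm μ ω p q f a t * ENNReal.ofReal t⁻¹

end LocalNormTail

namespace IsApqWeight

variable {X : Type*} [PseudoMetricSpace X] [MeasurableSpace X] {μ : Measure X} {ω : X → ℝ≥0∞}
  {p q p' : ℝ} {C K : ℝ≥0} {f : X → ℝ≥0∞} [OpensMeasurableSpace X]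

lemma rpowMeasure_ball_rpow_neg_inv_le (hω : IsApqWeight μ q p' C ω) (hμ : IsDoublingMeasure μ K)
    (hq : 0 < q) (hp' : 0 < p') (a : X) {r : ℝ} (hr : 0 < r) :
    rpowMeasure μ ω q (ball a r) ^ (-q⁻¹) ≤
      C * K ^ (q⁻¹ + p'⁻¹) * rpowMeasure μ ω q (ball a (2 * r)) ^ (-q⁻¹) := by
  rw [ENNReal.rpow_neg, ENNReal.rpow_neg]
  refine inv_le_mul_inv_of_le_mul (by finiteness) ?_
    (hω.rpowMeasure_ball_two_mul_rpow_inv_le hμ hq hp' a hr)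
  simpa [ENNReal.rpow_eq_zero_iff_of_pos (inv_pos.2 hq)] using
    hω.rpowMeasure_ball_ne_zero hμ q a (by positivity : 0 < 2 * r)

lemma normalizedLocalNorm_le_localNormTail (hω : IsApqWeight μ q p' C ω)
    (hμ : IsDoublingMeasure μ K) (hp : 0 < p) (hq : 0 < q) (hp' : 0 < p') (a : X) {r s : ℝ}
    (hs : 0 < s) (hrs : r ≤ s) :
    normalizedLocalNorm μ ω p q f a s ≤
      2 * (C * K ^ (q⁻¹ + p'⁻¹)) * localNormTail μ ω p q f a r := by
  set k : ℝ≥0∞ := C * K ^ (q⁻¹ + p'⁻¹)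
  set Q : ℝ → ℝ≥0∞ := fun t => (∫⁻ x in ball a t, f x ^ p ∂rpowMeasure μ ω p) ^ p⁻¹
  set V : ℝ → ℝ≥0∞ := fun t => rpowMeasure μ ω q (ball a t)
  calc Q s * V s ^ (-q⁻¹) ≤ Q s * (k * V (2 * s) ^ (-q⁻¹)) := by
        gcongr; exact hω.rpowMeasure_ball_rpow_neg_inv_le hμ hq hp' a hs
    _ = k * (Q s * V (2 * s) ^ (-q⁻¹)) := by ring
    _ ≤ k * (2 * ∫⁻ t in Ioi s, Q t * V t ^ (-q⁻¹) * ENNReal.ofReal t⁻¹) := by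
        refine mul_le_mul_right (le_two_mul_setLIntegral_Ioi_mul_inv hs fun t ht => ?_) _
        rw [ENNReal.rpow_neg, ENNReal.rpow_neg]
        simp only [Q, V]
        gcongr
        exacts [ht.1.le, ht.2]
    _ ≤ k * (2 * localNormTail μ ω p q f a r) := by
        gcongr
        exact lintegral_mono_set (Ioi_subset_Ioi hrs)
    _ = _ := by ring

lemma rpow_neg_mul_setLIntegral_ball_le (hω : IsApqWeight μ q p' C ω) (hμ : IsDoublingMeasure μ K)
    (hpp' : p.HolderConjugate p') (hq : 0 < q) (hf : Measurable f) (a : X) {r : ℝ} (hr : 0 < r) :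
    μ (ball a r) ^ (-(q⁻¹ + p'⁻¹)) * ∫⁻ y in ball a r, f y ∂μ ≤
      C * normalizedLocalNorm μ ω p q f a r := by
  have hd : 0 < q⁻¹ + p'⁻¹ := add_pos (inv_pos.2 hq) hpp'.symm.inv_pos
  have hB₀ : μ (ball a r) ^ (q⁻¹ + p'⁻¹) ≠ 0 :=
    (ENNReal.rpow_pos (pos_iff_ne_zero.2 (hμ.ball_ne_zero a r hr)) (hμ.ball_ne_top a r)).ne'
  have hB : μ (ball a r) ^ (q⁻¹ + p'⁻¹) ≠ ∞ :=
    ENNReal.rpow_ne_top_of_nonneg hd.le (hμ.ball_ne_top a r)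
  have hU₀ : rpowMeasure μ ω q (ball a r) ^ q⁻¹ ≠ 0 := by
    simpa [ENNReal.rpow_eq_zero_iff_of_pos (inv_pos.2 hq)] using
      hω.rpowMeasure_ball_ne_zero hμ q a hr
  have hU : rpowMeasure μ ω q (ball a r) ^ q⁻¹ ≠ ∞ :=
    ENNReal.rpow_ne_top_of_nonneg (by positivity)
      (hω.rpowMeasure_ball_ne_top hμ hq hpp'.symm.pos a r)
  have hA := hω.ball_mul_le a r hr
  rw [normalizedLocalNorm, ENNReal.rpow_neg, ENNReal.rpow_neg]
  set u := rpowMeasure μ ω q (ball a r) ^ q⁻¹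
  set v := μ (ball a r) ^ (q⁻¹ + p'⁻¹)
  set σ := rpowMeasure μ ω (-p') (ball a r) ^ p'⁻¹
  set Q := (∫⁻ x in ball a r, f x ^ p ∂rpowMeasure μ ω p) ^ p⁻¹
  calc v⁻¹ * ∫⁻ y in ball a r, f y ∂μ ≤ v⁻¹ * (Q * σ) := by
        gcongr; exact hω.setLIntegral_le_rpow_mul_rpow measurableSet_ball hpp' hf
    _ = v⁻¹ * Q * (u⁻¹ * (u * σ)) := by
        rw [← mul_assoc u⁻¹, ENNReal.inv_mul_cancel hU₀ hU, one_mul, mul_assoc]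
    _ ≤ v⁻¹ * Q * (u⁻¹ * (C * v)) := by gcongr
    _ = v⁻¹ * v * (C * (Q * u⁻¹)) := by ring
    _ = C * (Q * u⁻¹) := by rw [ENNReal.inv_mul_cancel hB₀ hB, one_mul]

lemma rpow_neg_mul_setLIntegral_ball_le_of_mem_ball (hω : IsApqWeight μ q p' C ω)
    (hμ : IsDoublingMeasure μ K) (hpp' : p.HolderConjugate p') (hq : 0 < q) (hf : Measurable f)
    {a x : X} {s : ℝ} (hx : x ∈ ball a s) :
    μ (ball x s) ^ (-(q⁻¹ + p'⁻¹)) * ∫⁻ y in ball x s, f y ∂μ ≤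
      (K ^ 2) ^ (q⁻¹ + p'⁻¹) * (C * normalizedLocalNorm μ ω p q f a (2 * s)) := by
  have hs : 0 < 2 * s := mul_pos two_pos (pos_of_mem_ball hx)
  have hd : 0 < q⁻¹ + p'⁻¹ := add_pos (inv_pos.2 hq) hpp'.symm.inv_pos
  have hxs : dist x a < s := hx
  have hμs : μ (ball a (2 * s)) ≤ K ^ 2 * μ (ball x s) :=
    (measure_mono (ball_subset_ball' (by rw [dist_comm]; linarith))).trans (hμ.ball_four_mul_le x s)
  have hμd : μ (ball x s) ^ (-(q⁻¹ + p'⁻¹)) ≤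
      (K ^ 2) ^ (q⁻¹ + p'⁻¹) * μ (ball a (2 * s)) ^ (-(q⁻¹ + p'⁻¹)) := by
    rw [ENNReal.rpow_neg, ENNReal.rpow_neg]
    refine inv_le_mul_inv_of_le_mul (by finiteness) ?_ ?_
    · simpa [ENNReal.rpow_eq_zero_iff_of_pos hd] using hμ.ball_ne_zero a (2 * s) hs
    · rw [← ENNReal.mul_rpow_of_nonneg _ _ hd.le]
      gcongr
  calc _ ≤ (K ^ 2) ^ (q⁻¹ + p'⁻¹) * μ (ball a (2 * s)) ^ (-(q⁻¹ + p'⁻¹)) *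
        ∫⁻ y in ball a (2 * s), f y ∂μ := by
        gcongr; exact ball_subset_ball' (by linarith)
    _ ≤ _ := by
        rw [mul_assoc]
        exact mul_le_mul_right (hω.rpow_neg_mul_setLIntegral_ball_le hμ hpp' hq hf a hs) _

lemma fractionalMaximal_le_max (hω : IsApqWeight μ q p' C ω) (hμ : IsDoublingMeasure μ K)
    (hpp' : p.HolderConjugate p') (hq : 0 < q) (hf : Measurable f) {a x : X} {r : ℝ}
    (hx : x ∈ ball a r) :
    fractionalMaximal μ (q⁻¹ + p'⁻¹) f x ≤
      max (fractionalMaximal μ (q⁻¹ + p'⁻¹) ((ball a (2 * r)).indicator f) x)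
        ((K ^ 2) ^ (q⁻¹ + p'⁻¹) * (C * (2 * (C * K ^ (q⁻¹ + p'⁻¹)) *
          localNormTail μ ω p q f a r))) := by
  refine fractionalMaximal_le_max_of_mem_ball hx fun s hrs => ?_
  have hr : 0 < r := pos_of_mem_ball hx
  refine (hω.rpow_neg_mul_setLIntegral_ball_le_of_mem_ball hμ hpp' hq hf
    (ball_subset_ball hrs hx)).trans ?_
  gcongr
  exact hω.normalizedLocalNorm_le_localNormTail hμ hpp'.pos hq hpp'.symm.pos a (by linarith)
    (by linarith)

lemma exists_rpow_setLIntegral_fractionalMaximal_indicator_le [SecondCountableTopology X]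
    (hω : IsApqWeight μ q p' C ω) (hμ : IsDoublingMeasure μ K)
    (hpp' : p.HolderConjugate p') (hpq : p ≤ q) :
    ∃ D : ℝ≥0, ∀ f : X → ℝ≥0∞, Measurable f → ∀ (a : X) (r : ℝ), 0 < r →
      rpowMeasure μ ω q (ball a r) ^ (-q⁻¹) * (∫⁻ x in ball a r,
          fractionalMaximal μ (q⁻¹ + p'⁻¹) ((ball a (2 * r)).indicator f) x ^ q
            ∂rpowMeasure μ ω q) ^ q⁻¹ ≤
        D * localNormTail μ ω p q f a r := by
  have hp := hpp'.pos
  have hp' := hpp'.symm.pos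
  have hq : 0 < q := hp.trans_le hpq
  obtain ⟨D, hD⟩ := hω.exists_lintegral_fractionalMaximal_rpow_le hμ hpp' hpq
  set k : ℝ≥0 := C * K ^ (q⁻¹ + p'⁻¹)
  have hk : (k : ℝ≥0∞) = C * K ^ (q⁻¹ + p'⁻¹) := by
    rw [ENNReal.coe_mul, ENNReal.coe_rpow_of_nonneg _ (by positivity)]
  refine ⟨D ^ q⁻¹ * k * (2 * k), fun f hf a r hr => ?_⟩
  have hnorm : ∫⁻ x, (ball a (2 * r)).indicator f x ^ p ∂rpowMeasure μ ω p =
      ∫⁻ x in ball a (2 * r), f x ^ p ∂rpowMeasure μ ω p := by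
    rw [← lintegral_indicator measurableSet_ball]
    refine lintegral_congr fun x => ?_
    by_cases hx : x ∈ ball a (2 * r) <;> simp [hx, hp]
  have hstrong : (∫⁻ x in ball a r, fractionalMaximal μ (q⁻¹ + p'⁻¹)
      ((ball a (2 * r)).indicator f) x ^ q ∂rpowMeasure μ ω q) ^ q⁻¹ ≤
      D ^ q⁻¹ * (∫⁻ x in ball a (2 * r), f x ^ p ∂rpowMeasure μ ω p) ^ p⁻¹ := by
    refine (ENNReal.rpow_le_rpow ((setLIntegral_le_lintegral _ _).trans
      (hD _ (hf.indicator measurableSet_ball))) (by positivity)).trans_eq ?_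
    rw [hnorm, ENNReal.mul_rpow_of_nonneg _ _ (by positivity), ← ENNReal.rpow_mul]
    congr 2
    field_simp
  calc _ ≤ k * rpowMeasure μ ω q (ball a (2 * r)) ^ (-q⁻¹) *
        (D ^ q⁻¹ * (∫⁻ x in ball a (2 * r), f x ^ p ∂rpowMeasure μ ω p) ^ p⁻¹) := by
        gcongr
        exact hk ▸ hω.rpowMeasure_ball_rpow_neg_inv_le hμ hq hp' a hr
    _ = D ^ q⁻¹ * k * normalizedLocalNorm μ ω p q f a (2 * r) := by rw [normalizedLocalNorm]; ring
    _ ≤ D ^ q⁻¹ * k * (2 * k * localNormTail μ ω p q f a r) := by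
        gcongr
        exact hk ▸ hω.normalizedLocalNorm_le_localNormTail hμ hp hq hp' a (by positivity)
          (by linarith)
    _ = _ := by
        push_cast [ENNReal.coe_rpow_of_nonneg _ (inv_nonneg.2 hq.le)]
        ring

lemma exists_rpow_setLIntegral_fractionalMaximal_rpow_le [SecondCountableTopology X]
    (hω : IsApqWeight μ q p' C ω) (hμ : IsDoublingMeasure μ K)
    (hpp' : p.HolderConjugate p') (hpq : p ≤ q) :
    ∃ D : ℝ≥0, ∀ f : X → ℝ≥0∞, Measurable f → ∀ (a : X) (r : ℝ), 0 < r →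
      rpowMeasure μ ω q (ball a r) ^ (-q⁻¹) *
          (∫⁻ x in ball a r, fractionalMaximal μ (q⁻¹ + p'⁻¹) f x ^ q ∂rpowMeasure μ ω q) ^ q⁻¹ ≤
        D * localNormTail μ ω p q f a r := by
  have hp' := hpp'.symm.pos
  have hq : 0 < q := hpp'.pos.trans_le hpq
  have hd : 0 ≤ q⁻¹ + p'⁻¹ := by positivity
  obtain ⟨D, hD⟩ := hω.exists_rpow_setLIntegral_fractionalMaximal_indicator_le hμ hpp' hpq
  refine ⟨D + (K ^ 2) ^ (q⁻¹ + p'⁻¹) * (C * (2 * (C * K ^ (q⁻¹ + p'⁻¹)))), fun f hf a r hr => ?_⟩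
  set T : ℝ≥0∞ := (K ^ 2) ^ (q⁻¹ + p'⁻¹) * (C * (2 * (C * K ^ (q⁻¹ + p'⁻¹)) *
    localNormTail μ ω p q f a r))
  set U := rpowMeasure μ ω q
  let M₀ := fractionalMaximal μ (q⁻¹ + p'⁻¹) ((ball a (2 * r)).indicator f)
  have hU : U (ball a r) ^ (-q⁻¹) * U (ball a r) ^ q⁻¹ = 1 := by
    rw [← ENNReal.rpow_add _ _ (hω.rpowMeasure_ball_ne_zero hμ q a hr)
      (hω.rpowMeasure_ball_ne_top hμ hq hp' a r), neg_add_cancel, ENNReal.rpow_zero]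
  calc _ ≤ U (ball a r) ^ (-q⁻¹) * (∫⁻ x in ball a r, max (M₀ x) T ^ q ∂U) ^ q⁻¹ := by
        refine mul_le_mul_right (ENNReal.rpow_le_rpow ?_ (by positivity)) _
        refine setLIntegral_mono' measurableSet_ball fun x hx => ?_
        gcongr
        exact hω.fractionalMaximal_le_max hμ hpp' hq hf hx
    _ ≤ U (ball a r) ^ (-q⁻¹) *
          ((∫⁻ x in ball a r, M₀ x ^ q ∂U) ^ q⁻¹ + T * U (ball a r) ^ q⁻¹) := by
        gcongr
        simpa only [Measure.restrict_apply_univ] using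
          rpow_inv_lintegral_max_const_rpow_le (ν := U.restrict (ball a r)) (hpp'.lt.le.trans hpq)
    _ = U (ball a r) ^ (-q⁻¹) * (∫⁻ x in ball a r, M₀ x ^ q ∂U) ^ q⁻¹ +
          T * (U (ball a r) ^ (-q⁻¹) * U (ball a r) ^ q⁻¹) := by ring
    _ ≤ D * localNormTail μ ω p q f a r + T := by
        rw [hU, mul_one]
        exact add_le_add_left (hD f hf a r hr) _
    _ = _ := by
        push_cast [ENNReal.coe_rpow_of_nonneg _ hd]
        ring

end IsApqWeight

section EuclideanSpace

lemma isDoublingMeasure_addHaar {E : Type*} [NormedAddCommGroup E] [NormedSpace ℝ E]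
    [FiniteDimensional ℝ E] [MeasurableSpace E] [BorelSpace E] (μ : Measure E)
    [μ.IsAddHaarMeasure] : IsDoublingMeasure μ (2 ^ Module.finrank ℝ E) where
  ball_ne_zero a r hr := (measure_ball_pos μ a hr).ne'
  ball_ne_top a r := measure_ball_lt_top.ne
  ball_two_mul_le a r := by
    rw [Measure.addHaar_ball_mul_of_pos μ a two_pos, Measure.addHaar_ball_center μ a r,
      ENNReal.ofReal_pow zero_le_two, ENNReal.ofReal_ofNat]
    push_cast
    rfl

variable {n : ℕ} {w : EuclideanSpace ℝ (Fin n) → ℝ} {B : Set (EuclideanSpace ℝ (Fin n))}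
  {p q p' : ℝ}

lemma IsWeight.isPosWeight (hw : IsWeight w) : IsPosWeight volume (ENNReal.ofReal ∘ w) where
  measurable := hw.1.ennreal_ofReal
  ae_ne_zero := hw.2.2.2.mono fun _ hx => (ENNReal.ofReal_pos.2 hx).ne'
  ae_ne_top := .of_forall fun _ => ENNReal.ofReal_ne_top

lemma IsWeight.ae_ofReal_rpow (hw : IsWeight w) (s : ℝ) :
    ∀ᵐ x, ENNReal.ofReal (w x ^ s) = (ENNReal.ofReal ∘ w) x ^ s :=
  hw.2.2.2.mono fun _ hx => (ENNReal.ofReal_rpow_of_pos hx).symm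

lemma IsWeight.wSet_rpow (hw : IsWeight w) (hB : MeasurableSet B) (s : ℝ) :
    wSet (fun x => w x ^ s) B = rpowMeasure volume (ENNReal.ofReal ∘ w) s B :=
  (lintegral_congr_ae (ae_restrict_of_ae (hw.ae_ofReal_rpow s))).trans (rpowMeasure_apply hB s).symm

lemma IsWeight.wLpE_rpow (hw : IsWeight w) (hB : MeasurableSet B) (s p : ℝ)
    (g : EuclideanSpace ℝ (Fin n) → ℝ≥0∞) :
    wLpE p (fun x => w x ^ s) g B =
      (∫⁻ x in B, g x ^ p ∂rpowMeasure volume (ENNReal.ofReal ∘ w) s) ^ p⁻¹ := by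
  rw [hw.isPosWeight.setLIntegral_rpowMeasure hB, ← one_div]
  refine congrArg (· ^ (1 / p)) (lintegral_congr_ae (ae_restrict_of_ae ?_))
  filter_upwards [hw.ae_ofReal_rpow s] with x hx
  rw [hx, mul_comm]

lemma IsWeight.exists_isApqWeight (hw : IsWeight w) (hApq : MuckApq p q p' w) (hq : 0 < q)
    (hp' : 0 < p') : ∃ C : ℝ≥0, IsApqWeight volume q p' C (ENNReal.ofReal ∘ w) := by
  obtain ⟨C, -, hC⟩ := hApq
  refine ⟨C.toNNReal, { hw.isPosWeight with ball_mul_le := fun a r hr => ?_ }⟩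
  have h : (volume (ball a r))⁻¹ ^ (1 / q) * wSet (fun x => w x ^ q) (ball a r) ^ (1 / q) *
      ((volume (ball a r))⁻¹ ^ (1 / p') * wSet (fun x => w x ^ (-p')) (ball a r) ^ (1 / p')) ≤
        ENNReal.ofReal C := by
    rw [← ENNReal.mul_rpow_of_nonneg _ _ (by positivity),
      ← ENNReal.mul_rpow_of_nonneg _ _ (by positivity)]
    exact hC a r hr
  rw [hw.wSet_rpow measurableSet_ball, hw.wSet_rpow measurableSet_ball, mul_mul_mul_comm,
    ← ENNReal.rpow_add_of_nonneg _ _ (by positivity) (by positivity), ENNReal.inv_rpow, mul_comm,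
    ← div_eq_mul_inv, one_div, one_div] at h
  refine (ENNReal.div_le_iff ?_ ?_).1 h
  · exact (ENNReal.rpow_pos (measure_ball_pos _ a hr) measure_ball_lt_top.ne).ne'
  · exact ENNReal.rpow_ne_top_of_nonneg (by positivity) measure_ball_lt_top.ne

lemma fracMax_eq_fractionalMaximal {α d : ℝ} (hd : α / n - 1 = -d)
    (f : EuclideanSpace ℝ (Fin n) → ℝ) :
    fracMax α f = fractionalMaximal volume d fun x => ENNReal.ofReal |f x| := by
  funext x
  rw [fracMax, hd, fractionalMaximal]

lemma wLp_le_morreyNorm_mul {ψ : EuclideanSpace ℝ (Fin n) → ℝ → ℝ}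
    {f : EuclideanSpace ℝ (Fin n) → ℝ} {a : EuclideanSpace ℝ (Fin n)} {r : ℝ} (hp : 0 < p)
    (hr : 0 < r) (hψ : 0 < ψ a r) (hw₀ : wSet w (ball a r) ≠ 0) (hw : wSet w (ball a r) ≠ ∞) :
    wLp p w f (ball a r) ≤
      morreyNorm p w ψ f * (ENNReal.ofReal (ψ a r) * wSet w (ball a r) ^ (1 / p)) := by
  have hψ₀ : ENNReal.ofReal (ψ a r) ≠ 0 := (ENNReal.ofReal_pos.2 hψ).ne'
  have hw₀' : wSet w (ball a r) ^ (1 / p) ≠ 0 := (ENNReal.rpow_pos_of_nonneg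
    (pos_iff_ne_zero.2 hw₀) (by positivity)).ne'
  have hw' : wSet w (ball a r) ^ (1 / p) ≠ ∞ := ENNReal.rpow_ne_top_of_nonneg (by positivity) hw
  rw [← ENNReal.div_le_iff (mul_ne_zero hψ₀ hw₀') (by finiteness), div_eq_mul_inv, mul_comm,
    ENNReal.mul_inv (.inl hψ₀) (.inl ENNReal.ofReal_ne_top), ← ENNReal.rpow_neg]
  exact le_iSup₂ (f := fun a (r : Ioi (0 : ℝ)) => (ENNReal.ofReal (ψ a r))⁻¹ *
    wSet w (ball a r) ^ (-(1 / p)) * wLp p w f (ball a r)) a ⟨r, hr⟩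

lemma morreyNormE_le_of_forall {ψ : EuclideanSpace ℝ (Fin n) → ℝ → ℝ}
    {g : EuclideanSpace ℝ (Fin n) → ℝ≥0∞} {N : ℝ≥0∞}
    (h : ∀ a r, 0 < r →
      wSet w (ball a r) ^ (-(1 / p)) * wLpE p w g (ball a r) ≤ N * ENNReal.ofReal (ψ a r)) :
    morreyNormE p w ψ g ≤ N := by
  refine iSup₂_le fun a r => ?_
  rw [mul_assoc, mul_comm, ← div_eq_mul_inv]
  exact ENNReal.div_le_of_le_mul (h a r r.2)

lemma IsWeight.localNormTail_le_morreyNorm_mul {C : ℝ≥0} (hw : IsWeight w)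
    (hω : IsApqWeight volume q p' C (ENNReal.ofReal ∘ w)) (hp : 0 < p) (hpq : p ≤ q)
    (hp' : 0 < p') {ψ : EuclideanSpace ℝ (Fin n) → ℝ → ℝ} (hψ : ∀ a r, 0 < r → 0 < ψ a r)
    {f : EuclideanSpace ℝ (Fin n) → ℝ} (hf : morreyNorm p (fun x => w x ^ p) ψ f ≠ ∞)
    (a : EuclideanSpace ℝ (Fin n)) {r : ℝ} (hr : 0 < r) :
    localNormTail volume (ENNReal.ofReal ∘ w) p q (fun x => ENNReal.ofReal |f x|) a r ≤
      morreyNorm p (fun x => w x ^ p) ψ f *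
        ∫⁻ t in Ioi r, wSet (fun x => w x ^ p) (ball a t) ^ (1 / p) *
          wSet (fun x => w x ^ q) (ball a t) ^ (-(1 / q)) * ENNReal.ofReal (ψ a t) *
            ENNReal.ofReal t⁻¹ := by
  have hμ := isDoublingMeasure_addHaar (volume : Measure (EuclideanSpace ℝ (Fin n)))
  rw [← lintegral_const_mul' _ _ hf]
  refine setLIntegral_mono' measurableSet_Ioi fun t ht => ?_
  have ht₀ : 0 < t := hr.trans ht
  rw [normalizedLocalNorm, ← hw.wLpE_rpow measurableSet_ball, ← hw.wSet_rpow measurableSet_ball,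
    ← one_div]
  calc wLp p (fun x => w x ^ p) f (ball a t) * wSet (fun x => w x ^ q) (ball a t) ^ (-(1 / q)) *
        ENNReal.ofReal t⁻¹
      ≤ morreyNorm p (fun x => w x ^ p) ψ f *
          (ENNReal.ofReal (ψ a t) * wSet (fun x => w x ^ p) (ball a t) ^ (1 / p)) *
          wSet (fun x => w x ^ q) (ball a t) ^ (-(1 / q)) * ENNReal.ofReal t⁻¹ := by
        refine mul_le_mul_left
          (mul_le_mul_left (wLp_le_morreyNorm_mul hp ht₀ (hψ a t ht₀) ?_ ?_) _) _
        · rw [hw.wSet_rpow measurableSet_ball]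
          exact hω.rpowMeasure_ball_ne_zero hμ p a ht₀
        · rw [hw.wSet_rpow measurableSet_ball]
          exact hω.rpowMeasure_ball_ne_top_of_le hμ hp.le hpq (hp.trans_le hpq) hp' a t
    _ = _ := by ring

end EuclideanSpace

lemma holderConjugate_and_le_of_one_div_eq {n α p q p' : ℝ} (hα : 0 ≤ α) (hp : 1 < p)
    (hpn : p * α < n) (hq : 1 / q = 1 / p - α / n) (hp' : 1 / p + 1 / p' = 1) :
    p.HolderConjugate p' ∧ p ≤ q := by
  have hp₀ : 0 < p := one_pos.trans hp
  have hn : 0 < n := (mul_nonneg hp₀.le hα).trans_lt hpn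
  have hq₀ : 0 < q := one_div_pos.1 <| by
    rw [hq, sub_pos, div_lt_div_iff₀ hn hp₀]
    linarith
  refine ⟨Real.holderConjugate_iff.2 ⟨hp, by simpa only [one_div] using hp'⟩, ?_⟩
  refine (one_div_le_one_div hq₀ hp₀).1 ?_
  rw [hq]
  exact sub_le_self _ (by positivity)

theorem statement16_general {n : ℕ} (α p q p' : ℝ) (hα : 0 ≤ α) (hp : 1 < p) (hpn : p * α < n)
    (hq : 1 / q = 1 / p - α / n) (hp' : 1 / p + 1 / p' = 1)
    (w : EuclideanSpace ℝ (Fin n) → ℝ) (hw : IsWeight w) (hApq : MuckApq p q p' w)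
    (ψ₁ ψ₂ : EuclideanSpace ℝ (Fin n) → ℝ → ℝ)
    (hψ₁ : ∀ a r, 0 < r → 0 < ψ₁ a r) (hψ₂ : ∀ a r, 0 < r → 0 < ψ₂ a r) (C : ℝ)
    (hcond : ∀ (a : EuclideanSpace ℝ (Fin n)) (r : ℝ), 0 < r →
      (∫⁻ t in Set.Ioi r,
        wSet (fun x => w x ^ p) (ball a t) ^ (1 / p) *
          wSet (fun x => w x ^ q) (ball a t) ^ (-(1 / q)) *
          ENNReal.ofReal (ψ₁ a t) * ENNReal.ofReal t⁻¹) ≤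
        ENNReal.ofReal (C * ψ₂ a r)) :
    ∃ C' : ℝ, 0 < C' ∧ ∀ f : EuclideanSpace ℝ (Fin n) → ℝ, Measurable f →
      morreyNormE q (fun x => w x ^ q) ψ₂ (fracMax α f) ≤
        ENNReal.ofReal C' * morreyNorm p (fun x => w x ^ p) ψ₁ f := by
  obtain ⟨hpp', hpq⟩ := holderConjugate_and_le_of_one_div_eq hα hp hpn hq hp'
  have hq₀ : 0 < q := hpp'.pos.trans_le hpq
  obtain ⟨A, hω⟩ := hw.exists_isApqWeight hApq hq₀ hpp'.symm.pos
  obtain ⟨D, hD⟩ := hω.exists_rpow_setLIntegral_fractionalMaximal_rpow_le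
    (isDoublingMeasure_addHaar volume) hpp' hpq
  have hd : α / n - 1 = -(q⁻¹ + p'⁻¹) := by simp only [one_div] at hq hp'; linarith
  refine ⟨D * max C 0 + 1, by positivity, fun f hf => ?_⟩
  set N := morreyNorm p (fun x => w x ^ p) ψ₁ f
  rcases eq_or_ne N ∞ with hN | hN
  · rw [hN, ENNReal.mul_top (ENNReal.ofReal_pos.2 (by positivity)).ne']
    exact le_top
  refine morreyNormE_le_of_forall fun a r hr => ?_
  rw [hw.wSet_rpow measurableSet_ball, hw.wLpE_rpow measurableSet_ball, one_div,
    fracMax_eq_fractionalMaximal hd]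
  calc _ ≤ D * localNormTail volume (ENNReal.ofReal ∘ w) p q (fun x => ENNReal.ofReal |f x|) a r :=
        hD _ (by fun_prop) a r hr
    _ ≤ D * (N * ENNReal.ofReal (C * ψ₂ a r)) := by
        gcongr
        exact (hw.localNormTail_le_morreyNorm_mul hω hpp'.pos hpq hpp'.symm.pos hψ₁ hN a hr).trans
          (by gcongr; exact hcond a r hr)
    _ = D * ENNReal.ofReal C * N * ENNReal.ofReal (ψ₂ a r) := by
        rw [ENNReal.ofReal_mul' (hψ₂ a r hr).le]
        ring
    _ ≤ _ := by
        gcongr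
        rw [← ENNReal.ofReal_coe_nnreal, ← ENNReal.ofReal_mul D.coe_nonneg]
        gcongr
        nlinarith [le_max_left C 0, D.coe_nonneg]

/-- Let `0 < α < n`, `1 < p < n/α`, `1/q = 1/p − α/n`, `w ∈ A_{p,q}`, and
let `ψ₁, ψ₂` be positive functions on `ℝⁿ × (0,∞)` with
`∫_r^∞ (w^p(B(a,t))^{1/p}/w^q(B(a,t))^{1/q})·ψ₁(a,t) dt/t ≤ C·ψ₂(a,r)` for all `(a,r)`.
Then the fractional maximal operator `M_α` is bounded from `M^{p,w^p}_{ψ₁}` to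
`M^{q,w^q}_{ψ₂}`. -/
theorem statement16 {n : ℕ} (α p q p' : ℝ) (hα : 0 < α) (hαn : α < n)
    (hp : 1 < p) (hpn : p < (n : ℝ) / α) (hq : 1 / q = 1 / p - α / n)
    (hp' : 1 / p + 1 / p' = 1)
    (w : EuclideanSpace ℝ (Fin n) → ℝ) (hw : IsWeight w) (hApq : MuckApq p q p' w)
    (ψ₁ ψ₂ : EuclideanSpace ℝ (Fin n) → ℝ → ℝ)
    (hψ₁ : ∀ a r, 0 < r → 0 < ψ₁ a r) (hψ₂ : ∀ a r, 0 < r → 0 < ψ₂ a r)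
    (C : ℝ) (hC : 0 < C)
    (hcond : ∀ (a : EuclideanSpace ℝ (Fin n)) (r : ℝ), 0 < r →
      (∫⁻ t in Set.Ioi r,
        wSet (fun x => w x ^ p) (ball a t) ^ (1 / p) *
          wSet (fun x => w x ^ q) (ball a t) ^ (-(1 / q)) *
          ENNReal.ofReal (ψ₁ a t) * ENNReal.ofReal t⁻¹) ≤
        ENNReal.ofReal (C * ψ₂ a r)) :
    ∃ C' : ℝ, 0 < C' ∧ ∀ f : EuclideanSpace ℝ (Fin n) → ℝ,
      MemLocWLp p (fun x => w x ^ p) f → morreyNorm p (fun x => w x ^ p) ψ₁ f < ⊤ →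
      morreyNormE q (fun x => w x ^ q) ψ₂ (fracMax α f) ≤
        ENNReal.ofReal C' * morreyNorm p (fun x => w x ^ p) ψ₁ f := by
  obtain ⟨C', hC', h⟩ := statement16_general α p q p' hα.le hp ((lt_div_iff₀ hα).1 hpn) hq hp'
    w hw hApq ψ₁ ψ₂ hψ₁ hψ₂ C hcond
  exact ⟨C', hC', fun f hf _ => h f hf.1⟩
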